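/- arXiv:math/0609310 — 3 statements merged into one kernel-verified Lean document; each statement's English description precedes it below -/
import Mathlib

section
/- Let X be a geodesic metric space. Then X is Gromov hyperbolic if and only if for every λ>0 and every η>0 there exists r₀>0 such that for all r ≥ r₀ the following holds: for every loop γ:[0,1]→X which is Lipschitz with constant λr and satisfies γ(1)=γ(0), and for all functions f,π: X→ℝ which are Lipschitz with constant λ/r, one has ∫₀¹ f(γ(s))·(π∘γ)'(s) ds ≤ η, where (π∘γ)' denotes the almost-everywhere defined derivative of the Lipschitz function π∘γ:[0,1]→ℝ. -/
open scoped NNReal ENNReal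
open MeasureTheory Filter

universe u v

namespace SharpIsop

/-- The closed unit disc `D² ⊂ ℝ²`. -/
def D2 : Set (ℝ × ℝ) := {p | p.1 ^ 2 + p.2 ^ 2 ≤ 1}

/-- The length (total variation over `[0,1]`) of a curve `γ : [0,1] → X`. -/
noncomputable def loopLength {X : Type u} [PseudoEMetricSpace X] (γ : ℝ → X) : ℝ :=
  (eVariationOn γ (Set.Icc 0 1)).toReal

/-- A Lipschitz loop in `X`: a Lipschitz map `γ : [0,1] → X` with `γ 0 = γ 1`. -/
def IsLipLoop {X : Type u} [PseudoEMetricSpace X] (γ : ℝ → X) : Prop :=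
  (∃ K : ℝ≥0, LipschitzOnWith K γ (Set.Icc 0 1)) ∧ γ 0 = γ 1

/-- The metric (directional) derivative of `φ : ℝ² → X` at `x` in direction `v`,
defined via a `limsup` so that it is everywhere defined (and agrees a.e. with the
limit when the latter exists). -/
noncomputable def mder {X : Type u} [PseudoMetricSpace X] (φ : ℝ × ℝ → X)
    (x v : ℝ × ℝ) : ℝ :=
  Filter.limsup (fun r : ℝ => dist (φ (x + r • v)) (φ x) / r) (nhdsWithin 0 (Set.Ioi 0))

/-- The Jacobian of a (semi)norm `s` on `ℝ²`:  `π / Leb²({v : s v ≤ 1})` if this set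
has finite measure, `0` otherwise. -/
noncomputable def jac2 (s : ℝ × ℝ → ℝ) : ℝ :=
  if volume {v : ℝ × ℝ | s v ≤ 1} < ⊤ then
    Real.pi / (volume {v : ℝ × ℝ | s v ≤ 1}).toReal
  else 0

/-- The parametrized (Hausdorff) area of a map `φ : D² → X`. -/
noncomputable def lipArea {X : Type u} [PseudoMetricSpace X] (φ : ℝ × ℝ → X) : ℝ :=
  ∫ x in D2, jac2 (mder φ x)

/-- `φ : D² → X` is a singular Lipschitz disc bounding the loop `γ : [0,1] → X`. -/
def BoundsLoop {X : Type u} [PseudoMetricSpace X] (φ : ℝ × ℝ → X) (γ : ℝ → X) : Prop :=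
  (∃ K : ℝ≥0, LipschitzOnWith K φ D2) ∧
    ∀ s ∈ Set.Icc (0:ℝ) 1, φ (Real.cos (2 * Real.pi * s), Real.sin (2 * Real.pi * s)) = γ s

/-- `g : [0, d x y] → X` is a geodesic from `x` to `y`. -/
def IsGeodesicSeg {X : Type u} [MetricSpace X] (x y : X) (g : ℝ → X) : Prop :=
  g 0 = x ∧ g (dist x y) = y ∧
    ∀ s ∈ Set.Icc (0:ℝ) (dist x y), ∀ t ∈ Set.Icc (0:ℝ) (dist x y),
      dist (g s) (g t) = |s - t|

/-- A geodesic metric space: any two points are joined by a geodesic. -/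
def GeodesicSpace (X : Type u) [MetricSpace X] : Prop :=
  ∀ x y : X, ∃ g : ℝ → X, IsGeodesicSeg x y g

/-- Gromov hyperbolicity via δ-slim geodesic triangles. -/
def GromovHyperbolic (X : Type u) [MetricSpace X] : Prop :=
  ∃ δ : ℝ, 0 ≤ δ ∧
    ∀ x y z : X, ∀ gxy gyz gzx : ℝ → X,
      IsGeodesicSeg x y gxy → IsGeodesicSeg y z gyz → IsGeodesicSeg z x gzx →
      ∀ s ∈ Set.Icc (0:ℝ) (dist x y),
        ∃ p ∈ gyz '' Set.Icc (0:ℝ) (dist y z) ∪ gzx '' Set.Icc (0:ℝ) (dist z x),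
          dist (gxy s) p ≤ δ

/-- `L^∞(X)`: the Banach space of bounded real functions on `X` with sup norm. -/
abbrev Linfty (X : Type u) : Type u := lp (fun _ : X => ℝ) ⊤

/-- The Kuratowski embedding `x ↦ d(x,·) − d(x₀,·)` of `X` into `L^∞(X)`. -/
noncomputable def kuratowski (X : Type u) [MetricSpace X] (x₀ : X) (x : X) : Linfty X :=
  ⟨fun y => dist x y - dist x₀ y, memℓp_infty ⟨dist x x₀, by
    rintro t ⟨y, rfl⟩
    simpa [Real.norm_eq_abs] using abs_dist_sub_le x x₀ y⟩⟩

/-- `Y` admits a quadratic isoperimetric inequality for curves (with singular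
Lipschitz discs as fillings). -/
def QuadIsopSpace (Y : Type u) [MetricSpace Y] : Prop :=
  ∃ C > (0:ℝ), ∀ c : ℝ → Y, IsLipLoop c →
    ∃ φ : ℝ × ℝ → Y, BoundsLoop φ c ∧ lipArea φ ≤ C * (loopLength c) ^ 2

/-- `X` admits a disc-thickening with a quadratic isoperimetric inequality. -/
def HasDiscThickeningQII (X : Type u) [MetricSpace X] : Prop :=
  ∃ (X' : Type u) (m : MetricSpace X') (ι : X → X'),
    letI := m
    CompleteSpace X' ∧ Isometry ι ∧
      EMetric.hausdorffEdist (Set.range ι) (Set.univ : Set X') ≠ ⊤ ∧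
      QuadIsopSpace X'

/-!
Suppose that triangles are `δ`-slim. Near each vertex of a triangle its two sides fellow-travel,
and integration by parts shows that two curves at uniform distance `D` have line integrals of
`f dp` differing by `O(D)`, so the integral around a triangle is of order `δ` times its perimeter.
Cut a `λr`-Lipschitz loop into `N` arcs. Replacing them by geodesics costs `O(1/N)` in the scaling
of the theorem, and coning off the resulting polygon produces `N` triangles of total integral
`O(N δ / r)`. Choose first `N` large and then `r`.

Conversely, suppose that a triangle is `4ρ`-slim but not `3ρ`-slim. Some point `m` of one side has
distance more than `3ρ` from the other two, and slimness produces a path of length at most `94ρ`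
from one side of `m` to the other that stays outside the ball of radius `ρ` around `m`. It closes
up with the geodesic through `m` to a loop of length `O(ρ)`. If `f` is a tent function supported in
the ball and `p` is the distance to the start of the geodesic, the integral of `f dp` over this loop
is at least `ρ² / 2`, which contradicts the hypothesis at a scale comparable to `ρ`. Hence the
slimness constant of any triangle, initially its perimeter, can be multiplied by `3/4` until it
drops below the fixed scale `r₀`.
-/

section LipschitzIntegrals

variable {F P F₁ P₁ F₂ P₂ : ℝ → ℝ} {K L : ℝ≥0} {a b : ℝ}

lemma intervalIntegrable_mul_deriv (hF : ContinuousOn F (Set.uIcc a b))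
    (hP : LipschitzOnWith L P (Set.uIcc a b)) :
    IntervalIntegrable (fun t => F t * deriv P t) volume a b :=
  hP.absolutelyContinuousOnInterval.intervalIntegrable_deriv.continuousOn_mul hF

lemma abs_integral_mul_deriv_le {C : ℝ} (hab : a ≤ b) (hF : ∀ t ∈ Set.Icc a b, |F t| ≤ C)
    (hP : LipschitzOnWith L P (Set.Icc a b)) :
    |∫ t in a..b, F t * deriv P t| ≤ C * L * (b - a) := by
  have hbound : ∀ t ∈ Set.Ioo a b, ‖F t * deriv P t‖ ≤ C * L := fun t ht => by
    have hFt := hF t (Set.Ioo_subset_Icc_self ht)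
    have hPt := norm_deriv_le_of_lipschitzOn (Icc_mem_nhds ht.1 ht.2) hP
    rw [norm_mul]
    exact mul_le_mul hFt hPt (norm_nonneg _) ((abs_nonneg _).trans hFt)
  have hae : ∀ᵐ t, t ∈ Set.uIoc a b → ‖F t * deriv P t‖ ≤ C * L := by
    filter_upwards [Measure.ae_ne volume b] with t htb ht
    rw [Set.uIoc_of_le hab] at ht
    exact hbound t ⟨ht.1, ht.2.lt_of_ne htb⟩
  simpa only [Real.norm_eq_abs, abs_of_nonneg (sub_nonneg.2 hab)] using
    intervalIntegral.norm_integral_le_of_norm_le_const_ae hae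

lemma integral_sub_const_mul_deriv (hF : ContinuousOn F (Set.uIcc a b))
    (hP : LipschitzOnWith L P (Set.uIcc a b)) (c : ℝ) :
    ∫ t in a..b, (F t - c) * deriv P t = (∫ t in a..b, F t * deriv P t) - c * (P b - P a) := by
  simp only [sub_mul]
  rw [intervalIntegral.integral_sub (intervalIntegrable_mul_deriv hF hP)
      (intervalIntegrable_mul_deriv continuousOn_const hP), intervalIntegral.integral_const_mul,
    hP.absolutelyContinuousOnInterval.integral_deriv_eq_sub]

lemma abs_integral_mul_deriv_sub_le (hab : a ≤ b) (hF : LipschitzOnWith K F (Set.Icc a b))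
    (hP : LipschitzOnWith L P (Set.Icc a b)) :
    |(∫ t in a..b, F t * deriv P t) - F a * (P b - P a)| ≤ K * L * (b - a) ^ 2 := by
  have hosc : ∀ t ∈ Set.Icc a b, |F t - F a| ≤ K * (b - a) := fun t ht => by
    have h := hF.dist_le_mul t ht a (Set.left_mem_Icc.2 hab)
    rw [Real.dist_eq, Real.dist_eq, abs_of_nonneg (sub_nonneg.2 ht.1)] at h
    exact h.trans (by gcongr; exact ht.2)
  have h := abs_integral_mul_deriv_le hab hosc hP
  rw [← Set.uIcc_of_le hab] at hF hP
  rw [integral_sub_const_mul_deriv hF.continuousOn hP] at h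
  exact h.trans_eq (by ring)

lemma integral_mul_deriv_sub_integral_mul_deriv (hF₁ : ContinuousOn F₁ (Set.uIcc a b))
    (hP₁ : LipschitzOnWith K P₁ (Set.uIcc a b)) (hF₂ : ContinuousOn F₂ (Set.uIcc a b))
    (hP₂ : LipschitzOnWith L P₂ (Set.uIcc a b)) :
    (∫ t in a..b, F₁ t * deriv P₁ t) - ∫ t in a..b, F₂ t * deriv P₂ t =
      (∫ t in a..b, (F₁ t - F₂ t) * deriv P₁ t) +
        ∫ t in a..b, F₂ t * deriv (fun u => P₁ u - P₂ u) t := by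
  have hderiv : ∫ t in a..b, F₂ t * deriv (fun u => P₁ u - P₂ u) t =
      ∫ t in a..b, (F₂ t * deriv P₁ t - F₂ t * deriv P₂ t) := by
    refine intervalIntegral.integral_congr_ae ?_
    filter_upwards [hP₁.absolutelyContinuousOnInterval.ae_differentiableAt,
      hP₂.absolutelyContinuousOnInterval.ae_differentiableAt] with t h₁ h₂ ht
    have ht' := Set.uIoc_subset_uIcc ht
    rw [deriv_fun_sub (h₁ ht') (h₂ ht'), mul_sub]
  have h₁₁ := intervalIntegrable_mul_deriv hF₁ hP₁
  have h₂₁ := intervalIntegrable_mul_deriv hF₂ hP₁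
  have h₂₂ := intervalIntegrable_mul_deriv hF₂ hP₂
  simp only [hderiv, sub_mul]
  rw [intervalIntegral.integral_sub h₁₁ h₂₁, intervalIntegral.integral_sub h₂₁ h₂₂]
  ring

-- Integrating by parts moves the derivative off the difference `P₁ - P₂`, which is only
-- known to be small in the sup norm.
lemma abs_integral_mul_deriv_sub_integral_mul_deriv_le {ε ε' M : ℝ} (hab : a ≤ b)
    (hF₁ : ContinuousOn F₁ (Set.Icc a b)) (hP₁ : LipschitzOnWith L P₁ (Set.Icc a b))
    (hF₂ : LipschitzOnWith K F₂ (Set.Icc a b)) (hP₂ : LipschitzOnWith L P₂ (Set.Icc a b))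
    (hF : ∀ t ∈ Set.Icc a b, |F₁ t - F₂ t| ≤ ε) (hP : ∀ t ∈ Set.Icc a b, |P₁ t - P₂ t| ≤ ε')
    (hM : ∀ t ∈ Set.Icc a b, |F₂ t| ≤ M) :
    |(∫ t in a..b, F₁ t * deriv P₁ t) - ∫ t in a..b, F₂ t * deriv P₂ t| ≤
      (ε * L + ε' * K) * (b - a) + 2 * M * ε' := by
  have hleft := abs_integral_mul_deriv_le hab hF hP₁
  have hright := abs_integral_mul_deriv_le hab hP hF₂
  have hboundary : ∀ t ∈ Set.Icc a b, |F₂ t * (P₁ t - P₂ t)| ≤ M * ε' := fun t ht => by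
    rw [abs_mul]
    exact mul_le_mul (hM t ht) (hP t ht) (abs_nonneg _) ((abs_nonneg _).trans (hM t ht))
  have ha := hboundary a (Set.left_mem_Icc.2 hab)
  have hb := hboundary b (Set.right_mem_Icc.2 hab)
  rw [← Set.uIcc_of_le hab] at hF₁ hP₁ hF₂ hP₂
  have hparts := AbsolutelyContinuousOnInterval.integral_mul_deriv_eq_deriv_mul
    hF₂.absolutelyContinuousOnInterval (hP₁.sub hP₂).absolutelyContinuousOnInterval
  simp only [mul_comm (deriv F₂ _)] at hparts
  rw [integral_mul_deriv_sub_integral_mul_deriv hF₁ hP₁ hF₂.continuousOn hP₂, hparts]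
  rw [abs_le] at *
  constructor <;> linarith

end LipschitzIntegrals

/-- The integral `∫_γ f dp` of the one-form `f dp` along the curve `γ` restricted to `[a, b]`,
i.e. the value on `(f, p)` of the metric 1-current induced by `γ`. -/
noncomputable def lineIntegral {X : Type*} (f p : X → ℝ) (γ : ℝ → X) (a b : ℝ) : ℝ :=
  ∫ t in a..b, f (γ t) * deriv (fun u => p (γ u)) t

section LineIntegral

variable {X : Type*} {f p : X → ℝ} {γ γ₁ γ₂ : ℝ → X} {a b c : ℝ}

lemma lineIntegral_self : lineIntegral f p γ a a = 0 :=
  intervalIntegral.integral_same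

lemma lineIntegral_comp_sub_left (d : ℝ) :
    lineIntegral f p (fun t => γ (d - t)) a b = -lineIntegral f p γ (d - b) (d - a) := by
  simp only [lineIntegral, deriv_comp_const_sub (fun u => p (γ u)), mul_neg,
    intervalIntegral.integral_neg,
    intervalIntegral.integral_comp_sub_left (fun t => f (γ t) * deriv (fun u => p (γ u)) t)]

lemma lineIntegral_comp_mul_add (d e : ℝ) :
    lineIntegral f p (fun t => γ (d * t + e)) a b = lineIntegral f p γ (d * a + e) (d * b + e) := by
  have hderiv : ∀ t, deriv (fun u => p (γ (d * u + e))) t =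
      d * deriv (fun u => p (γ u)) (d * t + e) := fun t => by
    rw [deriv_comp_mul_left d (fun u => p (γ (u + e))), deriv_comp_add_const (fun u => p (γ u)),
      smul_eq_mul]
  simp only [lineIntegral, hderiv, mul_left_comm _ d, intervalIntegral.integral_const_mul]
  exact intervalIntegral.mul_integral_comp_mul_add
    (f := fun t => f (γ t) * deriv (fun u => p (γ u)) t) d e

lemma lineIntegral_const_mul_const_mul (u v : ℝ) :
    lineIntegral (fun x => u * f x) (fun x => v * p x) γ a b = u * v * lineIntegral f p γ a b := by
  simp only [lineIntegral, deriv_const_mul_field, mul_mul_mul_comm,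
    intervalIntegral.integral_const_mul]

lemma lineIntegral_eq_zero (hab : a ≤ b) (h : ∀ t ∈ Set.Icc a b, f (γ t) = 0) :
    lineIntegral f p γ a b = 0 :=
  intervalIntegral.integral_zero_ae <| ae_of_all _ fun t ht => by
    rw [Set.uIoc_of_le hab] at ht
    rw [h t (Set.Ioc_subset_Icc_self ht), zero_mul]

lemma lineIntegral_congr (hab : a ≤ b) (h : Set.EqOn γ₁ γ₂ (Set.Ioo a b)) :
    lineIntegral f p γ₁ a b = lineIntegral f p γ₂ a b := by
  simp only [lineIntegral, intervalIntegral.integral_of_le hab, integral_Ioc_eq_integral_Ioo]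
  refine setIntegral_congr_fun measurableSet_Ioo fun t ht => ?_
  have hev : (fun u => p (γ₁ u)) =ᶠ[nhds t] fun u => p (γ₂ u) := by
    filter_upwards [Ioo_mem_nhds ht.1 ht.2] with u hu
    rw [h hu]
  simp only [h ht, hev.deriv_eq]

variable [PseudoMetricSpace X] {Kf Kp L : ℝ≥0}

lemma intervalIntegrable_comp_mul_deriv_comp (hab : a ≤ b) (hf : LipschitzWith Kf f)
    (hp : LipschitzWith Kp p) (hγ : LipschitzOnWith L γ (Set.Icc a b)) :
    IntervalIntegrable (fun t => f (γ t) * deriv (fun u => p (γ u)) t) volume a b := by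
  rw [← Set.uIcc_of_le hab] at hγ
  exact intervalIntegrable_mul_deriv (hf.continuous.comp_continuousOn hγ.continuousOn)
    (hp.comp_lipschitzOnWith hγ)

lemma lineIntegral_add_adjacent (hab : a ≤ b) (hbc : b ≤ c) (hf : LipschitzWith Kf f)
    (hp : LipschitzWith Kp p) (hγ : LipschitzOnWith L γ (Set.Icc a c)) :
    lineIntegral f p γ a b + lineIntegral f p γ b c = lineIntegral f p γ a c :=
  intervalIntegral.integral_add_adjacent_intervals
    (intervalIntegrable_comp_mul_deriv_comp hab hf hp (hγ.mono (Set.Icc_subset_Icc_right hbc)))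
    (intervalIntegrable_comp_mul_deriv_comp hbc hf hp (hγ.mono (Set.Icc_subset_Icc_left hab)))

lemma lineIntegral_sub_const (hab : a ≤ b) (hf : LipschitzWith Kf f) (hp : LipschitzWith Kp p)
    (hγ : LipschitzOnWith L γ (Set.Icc a b)) (c : ℝ) :
    lineIntegral (fun x => f x - c) p γ a b =
      lineIntegral f p γ a b - c * (p (γ b) - p (γ a)) := by
  rw [← Set.uIcc_of_le hab] at hγ
  exact integral_sub_const_mul_deriv (hf.continuous.comp_continuousOn hγ.continuousOn)
    (hp.comp_lipschitzOnWith hγ) c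

lemma abs_lineIntegral_sub_le (hab : a ≤ b) (hf : LipschitzWith Kf f) (hp : LipschitzWith Kp p)
    (hγ : LipschitzOnWith L γ (Set.Icc a b)) :
    |lineIntegral f p γ a b - f (γ a) * (p (γ b) - p (γ a))| ≤ Kf * Kp * (L * (b - a)) ^ 2 := by
  have h := abs_integral_mul_deriv_sub_le hab (hf.comp_lipschitzOnWith hγ)
    (hp.comp_lipschitzOnWith hγ)
  exact h.trans_eq (by push_cast; ring)

lemma abs_lineIntegral_sub_lineIntegral_le {D M : ℝ} (hab : a ≤ b) (hf : LipschitzWith Kf f)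
    (hp : LipschitzWith Kp p) (hγ₁ : LipschitzOnWith L γ₁ (Set.Icc a b))
    (hγ₂ : LipschitzOnWith L γ₂ (Set.Icc a b))
    (hD : ∀ t ∈ Set.Icc a b, dist (γ₁ t) (γ₂ t) ≤ D)
    (hM : ∀ t ∈ Set.Icc a b, |f (γ₂ t)| ≤ M) :
    |lineIntegral f p γ₁ a b - lineIntegral f p γ₂ a b| ≤
      2 * Kp * D * (Kf * L * (b - a) + M) := by
  have h := abs_integral_mul_deriv_sub_integral_mul_deriv_le hab
    (hf.continuous.comp_continuousOn hγ₁.continuousOn) (hp.comp_lipschitzOnWith hγ₁)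
    (hf.comp_lipschitzOnWith hγ₂) (hp.comp_lipschitzOnWith hγ₂)
    (fun t ht => (hf.dist_le_mul _ _).trans (mul_le_mul_of_nonneg_left (hD t ht) Kf.2))
    (fun t ht => (hp.dist_le_mul _ _).trans (mul_le_mul_of_nonneg_left (hD t ht) Kp.2)) hM
  exact h.trans_eq (by push_cast; ring)

end LineIntegral

/-- The Gromov product `(y | z)_x`, with the base point `x` as the first argument. It is the length
along which the sides issuing from `x` fellow-travel in a slim triangle with vertices `x, y, z`. -/
noncomputable def gromovProduct {X : Type*} [PseudoMetricSpace X] (x y z : X) : ℝ :=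
  (dist x y + dist x z - dist y z) / 2

/-- `g` is a geodesic parametrized by arc length on the set `A` of parameters, which allows
subsegments of an `IsGeodesicSeg` and starting parameters other than `0`. -/
def IsGeodesicOn {X : Type*} [PseudoMetricSpace X] (g : ℝ → X) (A : Set ℝ) : Prop :=
  ∀ s ∈ A, ∀ t ∈ A, dist (g s) (g t) = |s - t|

/-- A geodesic triangle with vertices `x`, `y`, `z` each of whose sides lies in the closed
`δ`-neighbourhood of the union of the other two. The sides are oriented cyclically. -/
structure IsSlimTriangle {X : Type*} [MetricSpace X] (δ : ℝ) (x y z : X) (gxy gyz gzx : ℝ → X) :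
    Prop where
  geodesic_xy : IsGeodesicSeg x y gxy
  geodesic_yz : IsGeodesicSeg y z gyz
  geodesic_zx : IsGeodesicSeg z x gzx
  slim_xy : ∀ s ∈ Set.Icc 0 (dist x y),
    ∃ q ∈ gyz '' Set.Icc 0 (dist y z) ∪ gzx '' Set.Icc 0 (dist z x), dist (gxy s) q ≤ δ
  slim_yz : ∀ s ∈ Set.Icc 0 (dist y z),
    ∃ q ∈ gzx '' Set.Icc 0 (dist z x) ∪ gxy '' Set.Icc 0 (dist x y), dist (gyz s) q ≤ δ
  slim_zx : ∀ s ∈ Set.Icc 0 (dist z x),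
    ∃ q ∈ gxy '' Set.Icc 0 (dist x y) ∪ gyz '' Set.Icc 0 (dist y z), dist (gzx s) q ≤ δ

section GromovProduct

variable {X : Type*} [PseudoMetricSpace X] (x y z : X)

lemma gromovProduct_nonneg : 0 ≤ gromovProduct x y z := by
  have := dist_triangle_left y z x
  unfold gromovProduct
  linarith

lemma gromovProduct_le_dist_left : gromovProduct x y z ≤ dist x y := by
  have := dist_triangle x y z
  unfold gromovProduct
  linarith

lemma gromovProduct_le_dist_right : gromovProduct x y z ≤ dist x z := by
  have := dist_triangle_right x y z
  unfold gromovProduct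
  linarith

lemma gromovProduct_add_gromovProduct :
    gromovProduct x y z + gromovProduct y z x = dist x y := by
  simp only [gromovProduct, dist_comm y x, dist_comm z x]
  ring

end GromovProduct

lemma IsGeodesicOn.mono {X : Type*} [PseudoMetricSpace X] {g : ℝ → X} {A B : Set ℝ}
    (hg : IsGeodesicOn g B) (hAB : A ⊆ B) : IsGeodesicOn g A :=
  fun s hs t ht => hg s (hAB hs) t (hAB ht)

lemma IsGeodesicOn.lipschitzOnWith {X : Type*} [PseudoMetricSpace X] {g : ℝ → X} {A : Set ℝ}
    (hg : IsGeodesicOn g A) : LipschitzOnWith 1 g A :=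
  LipschitzOnWith.of_dist_le_mul fun s hs t ht => by
    simpa [Real.dist_eq] using (hg s hs t ht).le

section Geodesics

variable {X : Type*} [MetricSpace X] {x y z : X} {g gxy gyz gzx : ℝ → X} {s t δ δ' : ℝ}

namespace IsGeodesicSeg

lemma isGeodesicOn (hg : IsGeodesicSeg x y g) : IsGeodesicOn g (Set.Icc 0 (dist x y)) :=
  hg.2.2

lemma lipschitzOnWith (hg : IsGeodesicSeg x y g) :
    LipschitzOnWith 1 g (Set.Icc 0 (dist x y)) :=
  hg.isGeodesicOn.lipschitzOnWith

lemma dist_left (hg : IsGeodesicSeg x y g) (ht : t ∈ Set.Icc 0 (dist x y)) :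
    dist x (g t) = t := by
  have h := hg.isGeodesicOn 0 (Set.left_mem_Icc.2 dist_nonneg) t ht
  rwa [hg.1, zero_sub, abs_neg, abs_of_nonneg ht.1] at h

lemma dist_right (hg : IsGeodesicSeg x y g) (ht : t ∈ Set.Icc 0 (dist x y)) :
    dist (g t) y = dist x y - t := by
  have h := hg.isGeodesicOn t ht _ (Set.right_mem_Icc.2 dist_nonneg)
  rwa [hg.2.1, abs_sub_comm, abs_of_nonneg (sub_nonneg.2 ht.2)] at h

lemma symm (hg : IsGeodesicSeg x y g) : IsGeodesicSeg y x fun t => g (dist x y - t) := by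
  refine ⟨by simpa using hg.2.1, by simpa [dist_comm y x] using hg.1, fun s hs t ht => ?_⟩
  rw [dist_comm y x] at hs ht
  rw [hg.isGeodesicOn _ ⟨by linarith [hs.2], by linarith [hs.1]⟩ _
    ⟨by linarith [ht.2], by linarith [ht.1]⟩, sub_sub_sub_cancel_left, abs_sub_comm]

lemma gromovProduct_le_dist (hg : IsGeodesicSeg y z g) (x : X)
    (ht : t ∈ Set.Icc 0 (dist y z)) : gromovProduct x y z ≤ dist x (g t) := by
  have hy := dist_triangle_right x y (g t)
  have hz := dist_triangle x (g t) z
  rw [hg.dist_left ht] at hy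
  rw [hg.dist_right ht] at hz
  unfold gromovProduct
  linarith

lemma abs_sub_le_dist {h : ℝ → X} (hg : IsGeodesicSeg x y g) (hh : IsGeodesicSeg z x h)
    (ht : t ∈ Set.Icc 0 (dist x y)) (hs : s ∈ Set.Icc 0 (dist z x)) :
    |t - (dist z x - s)| ≤ dist (g t) (h s) := by
  have hle := abs_dist_sub_le (g t) (h s) x
  rwa [dist_comm (g t) x, hg.dist_left ht, hh.dist_right hs] at hle

end IsGeodesicSeg

namespace IsSlimTriangle

lemma rotate (h : IsSlimTriangle δ x y z gxy gyz gzx) :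
    IsSlimTriangle δ y z x gyz gzx gxy :=
  ⟨h.geodesic_yz, h.geodesic_zx, h.geodesic_xy, h.slim_yz, h.slim_zx, h.slim_xy⟩

lemma mono (h : IsSlimTriangle δ x y z gxy gyz gzx) (hδ : δ ≤ δ') :
    IsSlimTriangle δ' x y z gxy gyz gzx where
  geodesic_xy := h.geodesic_xy
  geodesic_yz := h.geodesic_yz
  geodesic_zx := h.geodesic_zx
  slim_xy s hs := (h.slim_xy s hs).imp fun _ hq => ⟨hq.1, hq.2.trans hδ⟩
  slim_yz s hs := (h.slim_yz s hs).imp fun _ hq => ⟨hq.1, hq.2.trans hδ⟩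
  slim_zx s hs := (h.slim_zx s hs).imp fun _ hq => ⟨hq.1, hq.2.trans hδ⟩

lemma nonneg (h : IsSlimTriangle δ x y z gxy gyz gzx) : 0 ≤ δ :=
  have ⟨_, _, hq⟩ := h.slim_xy 0 (Set.left_mem_Icc.2 dist_nonneg)
  dist_nonneg.trans hq

lemma dist_le_two_mul_of_add_lt (h : IsSlimTriangle δ x y z gxy gyz gzx) (ht : 0 ≤ t)
    (htδ : t + δ < gromovProduct x y z) : dist (gxy t) (gzx (dist z x - t)) ≤ 2 * δ := by
  have hδ := h.nonneg
  have hαy := gromovProduct_le_dist_left x y z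
  have hαz := gromovProduct_le_dist_right x y z
  rw [dist_comm x z] at hαz
  have hxt := h.geodesic_xy.dist_left (t := t) ⟨ht, by linarith⟩
  obtain ⟨q, ⟨j, hj, rfl⟩ | ⟨i, hi, rfl⟩, hq⟩ := h.slim_xy t ⟨ht, by linarith⟩
  · have hxj := h.geodesic_yz.gromovProduct_le_dist x hj
    linarith [dist_triangle x (gxy t) (gyz j)]
  · have hti := (h.geodesic_xy.abs_sub_le_dist h.geodesic_zx ⟨ht, by linarith⟩ hi).trans hq
    have hit : dist (gzx i) (gzx (dist z x - t)) ≤ δ := by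
      rwa [h.geodesic_zx.isGeodesicOn i hi _ ⟨by linarith, by linarith⟩,
        show i - (dist z x - t) = t - (dist z x - i) by ring]
    linarith [dist_triangle (gxy t) (gzx i) (gzx (dist z x - t))]

lemma dist_le_four_mul (h : IsSlimTriangle δ x y z gxy gyz gzx)
    (ht : t ∈ Set.Icc 0 (gromovProduct x y z)) :
    dist (gxy t) (gzx (dist z x - t)) ≤ 4 * δ := by
  have hδ := h.nonneg
  have hαy := gromovProduct_le_dist_left x y z
  have hαz := gromovProduct_le_dist_right x y z
  rw [dist_comm x z] at hαz
  obtain ⟨ht₀, htα⟩ := ht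
  refine le_of_forall_pos_le_add fun ε hε => ?_
  rcases le_or_gt t (δ + ε / 2) with htδ | htδ
  · have hx := h.geodesic_xy.dist_left (t := t) ⟨ht₀, by linarith⟩
    have hx' := h.geodesic_zx.symm.dist_left (t := t)
      ⟨ht₀, by linarith [dist_comm x z]⟩
    linarith [dist_triangle_left (gxy t) (gzx (dist z x - t)) x]
  · -- Step back along both sides to get more than `δ` below the Gromov product.
    have hu := h.dist_le_two_mul_of_add_lt (t := t - (δ + ε / 2)) (by linarith) (by linarith)
    have hxy := h.geodesic_xy.isGeodesicOn t ⟨ht₀, by linarith⟩ (t - (δ + ε / 2))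
      ⟨by linarith, by linarith⟩
    have hzx := h.geodesic_zx.isGeodesicOn (dist z x - (t - (δ + ε / 2)))
      ⟨by linarith, by linarith⟩ (dist z x - t) ⟨by linarith, by linarith⟩
    rw [abs_of_nonneg (by linarith)] at hxy hzx
    linarith [dist_triangle4 (gxy t) (gxy (t - (δ + ε / 2)))
      (gzx (dist z x - (t - (δ + ε / 2)))) (gzx (dist z x - t))]

section Integral

variable {f p : X → ℝ} {Kf Kp : ℝ≥0}

lemma abs_lineIntegral_add_le {M : ℝ} (h : IsSlimTriangle δ x y z gxy gyz gzx)
    (hf : LipschitzWith Kf f) (hp : LipschitzWith Kp p)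
    (hM : ∀ t ∈ Set.Icc 0 (dist z x), |f (gzx t)| ≤ M) :
    |lineIntegral f p gxy 0 (gromovProduct x y z) +
        lineIntegral f p gzx (dist z x - gromovProduct x y z) (dist z x)| ≤
      8 * δ * Kp * (Kf * gromovProduct x y z + M) := by
  have hαy := gromovProduct_le_dist_left x y z
  have hαz := gromovProduct_le_dist_right x y z
  have hback : lineIntegral f p (fun t => gzx (dist z x - t)) 0 (gromovProduct x y z) =
      -lineIntegral f p gzx (dist z x - gromovProduct x y z) (dist z x) := by
    rw [lineIntegral_comp_sub_left, sub_zero]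
  have hcomp := abs_lineIntegral_sub_lineIntegral_le (gromovProduct_nonneg x y z) hf hp
    (h.geodesic_xy.lipschitzOnWith.mono (Set.Icc_subset_Icc_right hαy))
    (h.geodesic_zx.symm.lipschitzOnWith.mono (Set.Icc_subset_Icc_right hαz))
    (fun t ht => h.dist_le_four_mul ht) fun t ht => hM _
      ⟨by linarith [ht.2, dist_comm x z], by linarith [ht.1]⟩
  rw [hback, sub_neg_eq_add] at hcomp
  exact hcomp.trans_eq (by push_cast; ring)

lemma abs_lineIntegral_add_add_le_of_abs_le {M : ℝ} (h : IsSlimTriangle δ x y z gxy gyz gzx)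
    (hf : LipschitzWith Kf f) (hp : LipschitzWith Kp p)
    (hMxy : ∀ t ∈ Set.Icc 0 (dist x y), |f (gxy t)| ≤ M)
    (hMyz : ∀ t ∈ Set.Icc 0 (dist y z), |f (gyz t)| ≤ M)
    (hMzx : ∀ t ∈ Set.Icc 0 (dist z x), |f (gzx t)| ≤ M) :
    |lineIntegral f p gxy 0 (dist x y) + lineIntegral f p gyz 0 (dist y z) +
        lineIntegral f p gzx 0 (dist z x)| ≤
      8 * δ * Kp * (Kf * ((dist x y + dist y z + dist z x) / 2) + 3 * M) := by
  have hx := h.abs_lineIntegral_add_le hf hp hMzx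
  have hy := h.rotate.abs_lineIntegral_add_le hf hp hMxy
  have hz := h.rotate.rotate.abs_lineIntegral_add_le hf hp hMyz
  have hxy := gromovProduct_add_gromovProduct x y z
  have hyz := gromovProduct_add_gromovProduct y z x
  have hzx := gromovProduct_add_gromovProduct z x y
  have hα := gromovProduct_nonneg x y z
  have hβ := gromovProduct_nonneg y z x
  have hγ := gromovProduct_nonneg z x y
  rw [← lineIntegral_add_adjacent hα (by linarith) hf hp h.geodesic_xy.lipschitzOnWith,
    ← lineIntegral_add_adjacent hβ (by linarith) hf hp h.geodesic_yz.lipschitzOnWith,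
    ← lineIntegral_add_adjacent hγ (by linarith) hf hp h.geodesic_zx.lipschitzOnWith]
  rw [sub_eq_of_eq_add hzx.symm] at hx
  rw [sub_eq_of_eq_add hxy.symm] at hy
  rw [sub_eq_of_eq_add hyz.symm] at hz
  have hsum : dist x y + dist y z + dist z x =
      2 * (gromovProduct x y z + gromovProduct y z x + gromovProduct z x y) := by linarith
  rw [hsum]
  rw [abs_le] at *
  constructor <;> linarith

theorem abs_lineIntegral_add_add_le (h : IsSlimTriangle δ x y z gxy gyz gzx)
    (hf : LipschitzWith Kf f) (hp : LipschitzWith Kp p) :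
    |lineIntegral f p gxy 0 (dist x y) + lineIntegral f p gyz 0 (dist y z) +
        lineIntegral f p gzx 0 (dist z x)| ≤
      28 * δ * Kf * Kp * (dist x y + dist y z + dist z x) := by
  have hfx : LipschitzWith Kf fun q => f q - f x := by
    simpa using hf.sub (LipschitzWith.const (f x))
  have hM : ∀ q, dist x q ≤ dist x y + dist y z + dist z x →
      |f q - f x| ≤ Kf * (dist x y + dist y z + dist z x) := fun q hq => by
    have h := hf.dist_le_mul q x
    rw [dist_comm q] at h
    exact h.trans (mul_le_mul_of_nonneg_left hq Kf.2)
  have hsum := h.abs_lineIntegral_add_add_le_of_abs_le hfx hp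
    (fun t ht => hM _ (by
      linarith [h.geodesic_xy.dist_left ht, ht.2, @dist_nonneg _ _ y z, @dist_nonneg _ _ z x]))
    (fun t ht => hM _ (by
      linarith [h.geodesic_yz.dist_left ht, ht.2, dist_triangle x y (gyz t),
        @dist_nonneg _ _ z x]))
    (fun t ht => hM _ (by
      linarith [h.geodesic_zx.dist_right ht, dist_comm x (gzx t), ht.1, @dist_nonneg _ _ x y,
        @dist_nonneg _ _ y z]))
  -- The three corrections `f x * (p _ - p _)` telescope around the triangle.
  rw [lineIntegral_sub_const dist_nonneg hf hp h.geodesic_xy.lipschitzOnWith,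
    lineIntegral_sub_const dist_nonneg hf hp h.geodesic_yz.lipschitzOnWith,
    lineIntegral_sub_const dist_nonneg hf hp h.geodesic_zx.lipschitzOnWith,
    h.geodesic_xy.1, h.geodesic_xy.2.1, h.geodesic_yz.1, h.geodesic_yz.2.1,
    h.geodesic_zx.1, h.geodesic_zx.2.1] at hsum
  rw [abs_le] at *
  constructor <;> linarith

end Integral

end IsSlimTriangle

end Geodesics

lemma gromovHyperbolic_iff_isSlimTriangle {X : Type u} [MetricSpace X] :
    GromovHyperbolic X ↔ ∃ δ : ℝ, 0 ≤ δ ∧ ∀ (x y z : X) (gxy gyz gzx : ℝ → X),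
      IsGeodesicSeg x y gxy → IsGeodesicSeg y z gyz → IsGeodesicSeg z x gzx →
        IsSlimTriangle δ x y z gxy gyz gzx := by
  refine exists_congr fun δ => and_congr_right fun _ => ⟨fun h x y z gxy gyz gzx hxy hyz hzx => ?_,
    fun h x y z gxy gyz gzx hxy hyz hzx => (h x y z gxy gyz gzx hxy hyz hzx).slim_xy⟩
  exact ⟨hxy, hyz, hzx, h x y z _ _ _ hxy hyz hzx, h y z x _ _ _ hyz hzx hxy,
    h z x y _ _ _ hzx hxy hyz⟩

section Loops

lemma abs_sum_range_add_le {A : ℕ → ℕ → ℝ} {B : ℝ} (h₀ : A 0 0 = 0) {n : ℕ}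
    (hA : ∀ i ≤ n, ∀ j ≤ n, ∀ k ≤ n, |A i j + A j k + A k i| ≤ B) :
    |∑ k ∈ Finset.range n, A k (k + 1) + A n 0| ≤ n * (2 * B) := by
  induction n with
  | zero => simp [h₀]
  | succ n ih =>
    have hn := ih fun i hi j hj k hk => hA i (by omega) j (by omega) k (by omega)
    have htriangle := hA n (by omega) (n + 1) le_rfl 0 (by omega)
    have hbigon := hA n (by omega) 0 (by omega) 0 (by omega)
    rw [h₀, add_zero] at hbigon
    rw [Finset.sum_range_succ]
    push_cast
    rw [abs_le] at *
    constructor <;> linarith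

variable {X : Type u} [MetricSpace X] {f p : X → ℝ} {γ g : ℝ → X} {Kf Kp L : ℝ≥0} {a b δ : ℝ}

lemma abs_lineIntegral_sub_lineIntegral_geodesic_le (hab : a ≤ b) (hf : LipschitzWith Kf f)
    (hp : LipschitzWith Kp p) (hγ : LipschitzOnWith L γ (Set.Icc a b))
    (hg : IsGeodesicSeg (γ a) (γ b) g) :
    |lineIntegral f p γ a b - lineIntegral f p g 0 (dist (γ a) (γ b))| ≤
      2 * Kf * Kp * (L * (b - a)) ^ 2 := by
  have hchord := abs_lineIntegral_sub_le dist_nonneg hf hp hg.lipschitzOnWith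
  have hcurve := abs_lineIntegral_sub_le hab hf hp hγ
  have hdist := hγ.dist_le_mul a (Set.left_mem_Icc.2 hab) b (Set.right_mem_Icc.2 hab)
  rw [Real.dist_eq, abs_sub_comm, abs_of_nonneg (sub_nonneg.2 hab)] at hdist
  rw [hg.1, hg.2.1, NNReal.coe_one, one_mul, sub_zero] at hchord
  have hsq : Kf * Kp * dist (γ a) (γ b) ^ 2 ≤ Kf * Kp * (L * (b - a)) ^ 2 := by gcongr
  rw [abs_le] at *
  constructor <;> linarith

lemma sum_lineIntegral_div {N : ℕ} (hN : N ≠ 0) (hf : LipschitzWith Kf f)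
    (hp : LipschitzWith Kp p) (hγ : LipschitzOnWith L γ (Set.Icc 0 1)) :
    ∑ k ∈ Finset.range N, lineIntegral f p γ (k / N) ((k + 1 : ℕ) / N) =
      lineIntegral f p γ 0 1 := by
  have h := intervalIntegral.sum_integral_adjacent_intervals (μ := volume)
    (f := fun t => f (γ t) * deriv (fun u => p (γ u)) t) (a := fun k : ℕ => (k / N : ℝ)) (n := N)
    fun k hk => intervalIntegrable_comp_mul_deriv_comp (by gcongr; simp) hf hp <|
      hγ.mono <| Set.Icc_subset_Icc (by positivity) <|
        div_le_one_of_le₀ (by exact_mod_cast hk) (by positivity)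
  simpa [hN, lineIntegral] using h

lemma abs_sum_lineIntegral_polygon_le {G : X → X → ℝ → X}
    (hslim : ∀ x y z, IsSlimTriangle δ x y z (G x y) (G y z) (G z x))
    (hf : LipschitzWith Kf f) (hp : LipschitzWith Kp p) {u : ℕ → X} {N : ℕ} {D : ℝ}
    (hu : ∀ i ≤ N, ∀ j ≤ N, dist (u i) (u j) ≤ D) (hclosed : u N = u 0) :
    |∑ k ∈ Finset.range N,
        lineIntegral f p (G (u k) (u (k + 1))) 0 (dist (u k) (u (k + 1)))| ≤
      168 * N * δ * Kf * Kp * D := by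
  let J : X → X → ℝ := fun x y => lineIntegral f p (G x y) 0 (dist x y)
  have hδ : 0 ≤ δ := (hslim (u 0) (u 0) (u 0)).nonneg
  have hJ₀ : ∀ x, J x x = 0 := fun x => by simp only [J, dist_self, lineIntegral_self]
  have hJ : ∀ i ≤ N, ∀ j ≤ N, ∀ k ≤ N,
      |J (u i) (u j) + J (u j) (u k) + J (u k) (u i)| ≤ 28 * δ * Kf * Kp * (D + D + D) :=
    fun i hi j hj k hk =>
      ((hslim _ _ _).abs_lineIntegral_add_add_le hf hp).trans <| by
        gcongr <;> apply hu <;> assumption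
  have h := abs_sum_range_add_le (A := fun i j => J (u i) (u j)) (hJ₀ _) hJ
  rw [hclosed, hJ₀, add_zero] at h
  exact h.trans_eq (by ring)

theorem abs_lineIntegral_loop_le (hX : GeodesicSpace X)
    (hδ : ∀ (x y z : X) (gxy gyz gzx : ℝ → X), IsGeodesicSeg x y gxy → IsGeodesicSeg y z gyz →
      IsGeodesicSeg z x gzx → IsSlimTriangle δ x y z gxy gyz gzx)
    {N : ℕ} (hN : N ≠ 0) (hf : LipschitzWith Kf f) (hp : LipschitzWith Kp p)
    (hγ : LipschitzOnWith L γ (Set.Icc 0 1)) (hloop : γ 1 = γ 0) :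
    |lineIntegral f p γ 0 1| ≤ Kf * Kp * (2 * L ^ 2 / N + 168 * N * δ * L) := by
  choose G hG using hX
  have hN' : (N : ℝ) ≠ 0 := Nat.cast_ne_zero.2 hN
  let u : ℕ → X := fun k => γ (k / N)
  have hu : ∀ k ≤ N, (k / N : ℝ) ∈ Set.Icc (0 : ℝ) 1 := fun k hk =>
    ⟨by positivity, div_le_one_of_le₀ (by exact_mod_cast hk) (by positivity)⟩
  have hdist : ∀ i ≤ N, ∀ j ≤ N, dist (u i) (u j) ≤ L := fun i hi j hj =>
    (hγ.dist_le_mul _ (hu i hi) _ (hu j hj)).trans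
      (mul_le_of_le_one_right L.2 (Real.dist_le_of_mem_Icc_01 (hu i hi) (hu j hj)))
  have hclosed : u N = u 0 := by simp only [u, Nat.cast_zero, zero_div, div_self hN', hloop]
  have hpolygon := abs_sum_lineIntegral_polygon_le
    (fun x y z => hδ x y z _ _ _ (hG x y) (hG y z) (hG z x)) hf hp hdist hclosed
  have harc : ∀ k ∈ Finset.range N,
      |lineIntegral f p γ (k / N) ((k + 1 : ℕ) / N) -
          lineIntegral f p (G (u k) (u (k + 1))) 0 (dist (u k) (u (k + 1)))| ≤
        2 * Kf * Kp * (L * (1 / N)) ^ 2 := fun k hk => by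
    have hk := Finset.mem_range.1 hk
    have h := abs_lineIntegral_sub_lineIntegral_geodesic_le (by gcongr; simp) hf hp
      (hγ.mono (Set.Icc_subset_Icc (hu k hk.le).1 (hu (k + 1) hk).2)) (hG (u k) (u (k + 1)))
    exact h.trans_eq (by push_cast; ring)
  have hsum := (Finset.abs_sum_le_sum_abs _ _).trans (Finset.sum_le_sum harc)
  rw [Finset.sum_sub_distrib, sum_lineIntegral_div hN hf hp hγ, Finset.sum_const,
    Finset.card_range, nsmul_eq_mul] at hsum
  calc |lineIntegral f p γ 0 1|
      ≤ N * (2 * Kf * Kp * (L * (1 / N)) ^ 2) + 168 * N * δ * Kf * Kp * L := by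
        rw [abs_le] at *
        constructor <;> linarith
    _ = Kf * Kp * (2 * L ^ 2 / N + 168 * N * δ * L) := by
        field_simp

end Loops

/-- The integral inequality of the theorem at the scale `r`, for all loops of speed at most
`lam * r` and all `lam / r`-Lipschitz functions. -/
def LoopIntegralsLE (X : Type*) [PseudoMetricSpace X] (lam η r : ℝ) : Prop :=
  ∀ γ : ℝ → X, LipschitzOnWith (Real.toNNReal (lam * r)) γ (Set.Icc 0 1) → γ 1 = γ 0 →
    ∀ f p : X → ℝ, LipschitzWith (Real.toNNReal (lam / r)) f →
      LipschitzWith (Real.toNNReal (lam / r)) p → lineIntegral f p γ 0 1 ≤ η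

theorem GromovHyperbolic.exists_loopIntegralsLE {X : Type u} [MetricSpace X]
    (h : GromovHyperbolic X) (hX : GeodesicSpace X) {lam η : ℝ} (hlam : 0 < lam) (hη : 0 < η) :
    ∃ r₀ > 0, ∀ r : ℝ, r₀ ≤ r → LoopIntegralsLE X lam η r := by
  obtain ⟨δ, hδ, hslim⟩ := gromovHyperbolic_iff_isSlimTriangle.1 h
  obtain ⟨N, hN⟩ := exists_nat_gt (4 * lam ^ 4 / η)
  have hN₀ : (0 : ℝ) < N := lt_of_le_of_lt (by positivity) hN
  refine ⟨336 * N * lam ^ 3 * δ / η + 1, by positivity, fun r hr γ hγ hloop f p hf hp => ?_⟩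
  have hr₀ : 0 < r := lt_of_lt_of_le (by positivity) hr
  have hL := abs_lineIntegral_loop_le hX hslim (Nat.cast_pos.1 hN₀).ne' hf hp hγ hloop
  rw [Real.coe_toNNReal _ (by positivity), Real.coe_toNNReal _ (by positivity)] at hL
  have hfine : 2 * lam ^ 4 / N ≤ η / 2 := by
    rw [div_lt_iff₀ hη] at hN
    rw [div_le_iff₀ hN₀]
    linarith
  have hthin : 168 * N * lam ^ 3 * δ / r ≤ η / 2 := by
    have h : 336 * N * lam ^ 3 * δ / η ≤ r := by linarith
    rw [div_le_iff₀ hη] at h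
    rw [div_le_iff₀ hr₀]
    linarith
  calc lineIntegral f p γ 0 1
      ≤ lam / r * (lam / r) * (2 * (lam * r) ^ 2 / N + 168 * N * δ * (lam * r)) :=
        (le_abs_self _).trans hL
    _ = 2 * lam ^ 4 / N + 168 * N * lam ^ 3 * δ / r := by field_simp
    _ ≤ η := by linarith

lemma LoopIntegralsLE.lineIntegral_le {X : Type*} [PseudoMetricSpace X] {K : ℝ≥0} {η r a b : ℝ}
    {c : ℝ → X} {f p : X → ℝ} (h : LoopIntegralsLE X K η r) (hr : 0 < r) (hab : a ≤ b)
    (hbr : b - a ≤ r) (hc : LipschitzOnWith K c (Set.Icc a b)) (hclosed : c b = c a)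
    (hf : LipschitzWith K f) (hp : LipschitzWith K p) :
    lineIntegral f p c a b ≤ η * r ^ 2 := by
  have hγ : LipschitzOnWith (Real.toNNReal (K * r)) (fun t => c ((b - a) * t + a))
      (Set.Icc 0 1) := LipschitzOnWith.of_dist_le_mul fun s hs t ht => by
    have hmem : ∀ t ∈ Set.Icc (0 : ℝ) 1, (b - a) * t + a ∈ Set.Icc a b := fun t ht =>
      ⟨by nlinarith [ht.1], by nlinarith [ht.2]⟩
    refine (hc.dist_le_mul _ (hmem s hs) _ (hmem t ht)).trans ?_
    rw [Real.coe_toNNReal _ (by positivity), dist_add_right, Real.dist_eq, ← mul_sub, abs_mul,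
      abs_of_nonneg (sub_nonneg.2 hab), Real.dist_eq, mul_assoc]
    gcongr
  have hscale : ∀ {q : X → ℝ}, LipschitzWith K q →
      LipschitzWith (Real.toNNReal (K / r)) fun x => r⁻¹ * q x := fun {q} hq =>
    LipschitzWith.of_dist_le_mul fun x y => by
      rw [Real.coe_toNNReal _ (by positivity), Real.dist_eq, ← mul_sub, abs_mul,
        abs_of_pos (inv_pos.2 hr), div_eq_inv_mul, mul_assoc]
      gcongr
      exact hq.dist_le_mul x y
  have hle := h _ hγ (by simpa using hclosed) _ _ (hscale hf) (hscale hp)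
  rw [lineIntegral_const_mul_const_mul, lineIntegral_comp_mul_add, mul_zero, zero_add, mul_one,
    sub_add_cancel, ← mul_inv, ← sq, inv_mul_le_iff₀ (by positivity)] at hle
  linarith

/-- The concatenation of the curve `c₁`, followed up to the parameter `b`, with the curve `c₂`,
followed from the parameter `0` on. -/
noncomputable def concatAt {X : Type*} (b : ℝ) (c₁ c₂ : ℝ → X) (t : ℝ) : X :=
  if t ≤ b then c₁ t else c₂ (t - b)

section ConcatAt

variable {X : Type*} {c₁ c₂ : ℝ → X} {a b t T : ℝ}

lemma concatAt_of_le (ht : t ≤ b) : concatAt b c₁ c₂ t = c₁ t :=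
  if_pos ht

lemma concatAt_of_ge (h : c₁ b = c₂ 0) (ht : b ≤ t) : concatAt b c₁ c₂ t = c₂ (t - b) := by
  rcases ht.eq_or_lt with rfl | hlt
  · rw [concatAt_of_le le_rfl, h, sub_self]
  · exact if_neg hlt.not_ge

lemma lipschitzOnWith_concatAt [PseudoMetricSpace X] {K : ℝ≥0}
    (h₁ : LipschitzOnWith K c₁ (Set.Icc a b)) (h₂ : LipschitzOnWith K c₂ (Set.Icc 0 T))
    (h : c₁ b = c₂ 0) : LipschitzOnWith K (concatAt b c₁ c₂) (Set.Icc a (b + T)) := by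
  refine LipschitzOnWith.of_dist_le_mul fun s hs t ht => ?_
  wlog hst : s ≤ t generalizing s t
  · rw [dist_comm, dist_comm s]
    exact this t ht s hs (le_of_not_ge hst)
  have hmem : ∀ {u}, b ≤ u → u ≤ t → u - b ∈ Set.Icc 0 T := fun hbu hut =>
    ⟨by linarith, by linarith [ht.2]⟩
  rcases le_total t b with htb | hbt
  · rw [concatAt_of_le (hst.trans htb), concatAt_of_le htb]
    exact h₁.dist_le_mul s ⟨hs.1, hst.trans htb⟩ t ⟨ht.1, htb⟩
  rcases le_total s b with hsb | hbs
  · have hleft := h₁.dist_le_mul s ⟨hs.1, hsb⟩ b ⟨hs.1.trans hsb, le_rfl⟩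
    have hright := h₂.dist_le_mul (b - b) (hmem le_rfl hbt) (t - b) (hmem hbt le_rfl)
    rw [concatAt_of_le hsb, concatAt_of_ge h hbt]
    rw [dist_sub_right, sub_self] at hright
    rw [h] at hleft
    rw [Real.dist_eq, abs_sub_comm, abs_of_nonneg (by linarith)] at hleft hright ⊢
    linarith [dist_triangle (c₁ s) (c₂ 0) (c₂ (t - b))]
  · rw [concatAt_of_ge h hbs, concatAt_of_ge h hbt, ← dist_sub_right s t b]
    exact h₂.dist_le_mul _ (hmem hbs hst) _ (hmem hbt le_rfl)

end ConcatAt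

/-- The points `p` and `q` are joined by a 1-Lipschitz curve, parametrized by `[0, T]`, that avoids
the open ball of radius `ρ` around `m`. -/
def HasDetour {X : Type*} [PseudoMetricSpace X] (m : X) (ρ T : ℝ) (p q : X) : Prop :=
  0 ≤ T ∧ ∃ c : ℝ → X, LipschitzOnWith 1 c (Set.Icc 0 T) ∧ c 0 = p ∧ c T = q ∧
    ∀ t ∈ Set.Icc 0 T, ρ ≤ dist (c t) m

namespace HasDetour

variable {X : Type*} [PseudoMetricSpace X] {m p q w : X} {ρ T T' : ℝ}

lemma refl (hT : 0 ≤ T) (hp : ρ ≤ dist p m) : HasDetour m ρ T p p :=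
  ⟨hT, fun _ => p, LipschitzWith.const' p |>.lipschitzOnWith, rfl, rfl, fun _ _ => hp⟩

lemma symm (h : HasDetour m ρ T p q) : HasDetour m ρ T q p := by
  obtain ⟨hT, c, hc, hp, hq, hm⟩ := h
  have hmem : ∀ t ∈ Set.Icc 0 T, T - t ∈ Set.Icc 0 T := fun t ht =>
    ⟨sub_nonneg.2 ht.2, sub_le_self T ht.1⟩
  refine ⟨hT, fun t => c (T - t), LipschitzOnWith.of_dist_le_mul fun s hs t ht => ?_,
    by simpa using hq, by simpa using hp, fun t ht => hm _ (hmem t ht)⟩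
  simpa only [dist_sub_left] using hc.dist_le_mul _ (hmem s hs) _ (hmem t ht)

lemma trans (h : HasDetour m ρ T p q) (h' : HasDetour m ρ T' q w) :
    HasDetour m ρ (T + T') p w := by
  obtain ⟨hT, c, hc, hp, hq, hm⟩ := h
  obtain ⟨hT', c', hc', hq', hw, hm'⟩ := h'
  have hjoin : c T = c' 0 := hq.trans hq'.symm
  refine ⟨add_nonneg hT hT', concatAt T c c', lipschitzOnWith_concatAt hc hc' hjoin,
    (concatAt_of_le hT).trans hp, ?_, fun t ht => ?_⟩
  · rw [concatAt_of_ge hjoin (le_add_of_nonneg_right hT'), add_sub_cancel_left, hw]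
  · rcases le_total t T with htT | hTt
    · rw [concatAt_of_le htT]
      exact hm t ⟨ht.1, htT⟩
    · rw [concatAt_of_ge hjoin hTt]
      exact hm' _ ⟨sub_nonneg.2 hTt, sub_le_iff_le_add'.2 ht.2⟩

lemma le_dist_right (h : HasDetour m ρ T p q) : ρ ≤ dist q m := by
  obtain ⟨hT, c, -, -, rfl, hm⟩ := h
  exact hm T (Set.right_mem_Icc.2 hT)

lemma mono (h : HasDetour m ρ T p q) (hT : T ≤ T') : HasDetour m ρ T' p q := by
  simpa using h.trans (refl (sub_nonneg.2 hT) h.le_dist_right)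

lemma dist_le (h : HasDetour m ρ T p q) : dist p q ≤ T := by
  obtain ⟨hT, c, hc, rfl, rfl, -⟩ := h
  simpa [abs_of_nonneg hT] using
    hc.dist_le_mul 0 (Set.left_mem_Icc.2 hT) T (Set.right_mem_Icc.2 hT)

lemma of_lipschitzOnWith {c : ℝ → X} {A : Set ℝ} (hA : A.OrdConnected)
    (hc : LipschitzOnWith 1 c A) (hm : ∀ t ∈ A, ρ ≤ dist (c t) m) {i j : ℝ} (hi : i ∈ A)
    (hj : j ∈ A) : HasDetour m ρ |i - j| (c i) (c j) := by
  wlog hij : i ≤ j generalizing i j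
  · rw [abs_sub_comm]
    exact (this hj hi (le_of_not_ge hij)).symm
  rw [abs_sub_comm, abs_of_nonneg (sub_nonneg.2 hij)]
  have hmem : ∀ t ∈ Set.Icc 0 (j - i), i + t ∈ A := fun t ht =>
    hA.out hi hj ⟨by linarith [ht.1], by linarith [ht.2]⟩
  refine ⟨sub_nonneg.2 hij, fun t => c (i + t), LipschitzOnWith.of_dist_le_mul fun s hs t ht => ?_,
    by simp, by simp, fun t ht => hm _ (hmem t ht)⟩
  simpa using hc.dist_le_mul _ (hmem s hs) _ (hmem t ht)

lemma trans_lipschitzOnWith {c : ℝ → X} {A : Set ℝ} (hA : A.OrdConnected)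
    (hc : LipschitzOnWith 1 c A) (hm : ∀ t ∈ A, ρ ≤ dist (c t) m) {i j : ℝ} (hi : i ∈ A)
    (hj : j ∈ A) (hp : HasDetour m ρ T p (c i)) (hij : |i - j| ≤ T') :
    HasDetour m ρ (T + T') p (c j) :=
  (hp.trans (of_lipschitzOnWith hA hc hm hi hj)).mono (by gcongr)

end HasDetour

lemma HasDetour.of_dist_le {X : Type u} [MetricSpace X] (hX : GeodesicSpace X) {m p q : X}
    {ρ T : ℝ} (hT : dist p q ≤ T) (hρ : ρ ≤ gromovProduct m p q) : HasDetour m ρ T p q := by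
  obtain ⟨g, hg⟩ := hX p q
  refine HasDetour.mono ⟨dist_nonneg, g, hg.lipschitzOnWith, hg.1, hg.2.1, fun t ht => ?_⟩ hT
  rw [dist_comm]
  exact hρ.trans (hg.gromovProduct_le_dist m ht)

section NoShortDetour

variable {X : Type*} [PseudoMetricSpace X] {g : ℝ → X} {a b s ρ : ℝ}

lemma sq_div_two_le_integral_tent (hρ : 0 ≤ ρ) (has : a + ρ ≤ s) (hsb : s + ρ ≤ b) :
    ρ ^ 2 / 2 ≤ ∫ t in a..b, max 0 (ρ - |t - s|) := by
  have hcont : Continuous fun t => max 0 (ρ - |t - s|) := by fun_prop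
  calc ρ ^ 2 / 2 = ∫ _ in (s - ρ / 2)..(s + ρ / 2), ρ / 2 := by
        rw [intervalIntegral.integral_const, smul_eq_mul]
        ring
    _ ≤ ∫ t in (s - ρ / 2)..(s + ρ / 2), max 0 (ρ - |t - s|) := by
        refine intervalIntegral.integral_mono_on (by linarith) intervalIntegrable_const
          (hcont.intervalIntegrable _ _) fun t ht => le_max_of_le_right ?_
        have hts : |t - s| ≤ ρ / 2 := abs_le.2 ⟨by linarith [ht.1], by linarith [ht.2]⟩
        linarith
    _ ≤ ∫ t in a..b, max 0 (ρ - |t - s|) :=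
        intervalIntegral.integral_mono_interval (by linarith) (by linarith) (by linarith)
          (Filter.Eventually.of_forall fun t => le_max_left _ _) (hcont.intervalIntegrable _ _)

lemma sq_div_two_le_lineIntegral_tent (hg : IsGeodesicOn g (Set.Icc a b)) (hρ : 0 ≤ ρ)
    (has : a + ρ ≤ s) (hsb : s + ρ ≤ b) :
    ρ ^ 2 / 2 ≤
      lineIntegral (fun x => max 0 (ρ - dist x (g s))) (fun x => dist x (g a)) g a b := by
  have hab : a ≤ b := by linarith
  refine (sq_div_two_le_integral_tent hρ has hsb).trans_eq ?_
  simp only [lineIntegral, intervalIntegral.integral_of_le hab, integral_Ioc_eq_integral_Ioo]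
  refine setIntegral_congr_fun measurableSet_Ioo fun t ht => ?_
  have hev : (fun u => dist (g u) (g a)) =ᶠ[nhds t] fun u => u - a := by
    filter_upwards [Ioo_mem_nhds ht.1 ht.2] with u hu
    rw [hg u (Set.Ioo_subset_Icc_self hu) a (Set.left_mem_Icc.2 hab),
      abs_of_pos (sub_pos.2 hu.1)]
  simp only [hev.deriv_eq, deriv_sub_const_fun, deriv_id'', mul_one,
    hg t (Set.Ioo_subset_Icc_self ht) s ⟨by linarith, by linarith⟩]

theorem HasDetour.sq_div_two_le {T η r : ℝ} (hdetour : HasDetour (g s) ρ T (g b) (g a))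
    (hg : IsGeodesicOn g (Set.Icc a b)) (hρ : 0 ≤ ρ) (has : a + ρ ≤ s) (hsb : s + ρ ≤ b)
    (hr : 0 < r) (hTr : 2 * T ≤ r) (h : LoopIntegralsLE X 1 η r) : ρ ^ 2 / 2 ≤ η * r ^ 2 := by
  have hab : a ≤ b := by linarith
  have hbT : b - a ≤ T := by
    have := hdetour.dist_le
    rwa [hg b (Set.right_mem_Icc.2 hab) a (Set.left_mem_Icc.2 hab),
      abs_of_nonneg (sub_nonneg.2 hab)] at this
  obtain ⟨hT, c, hc, hc₀, hcT, hfar⟩ := hdetour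
  let f : X → ℝ := fun x => max 0 (ρ - dist x (g s))
  let p : X → ℝ := fun x => dist x (g a)
  let σ : ℝ → X := concatAt b g c
  have hf : LipschitzWith 1 f := by
    simpa only [zero_add] using
      ((LipschitzWith.const ρ).sub (LipschitzWith.dist_left (g s))).const_max 0
  have hp : LipschitzWith 1 p := LipschitzWith.dist_left (g a)
  have hjoin : g b = c 0 := hc₀.symm
  have hσ : LipschitzOnWith 1 σ (Set.Icc a (b + T)) :=
    lipschitzOnWith_concatAt hg.lipschitzOnWith hc hjoin
  have hclosed : σ (b + T) = σ a :=
    calc σ (b + T) = c T := by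
          rw [show σ (b + T) = _ from concatAt_of_ge hjoin (le_add_of_nonneg_right hT),
            add_sub_cancel_left]
      _ = σ a := hcT.trans (concatAt_of_le hab).symm
  have hgeodesic : lineIntegral f p σ a b = lineIntegral f p g a b :=
    lineIntegral_congr hab fun t ht => concatAt_of_le ht.2.le
  have hvanish : lineIntegral f p σ b (b + T) = 0 :=
    lineIntegral_eq_zero (le_add_of_nonneg_right hT) fun t ht => max_eq_left <| by
      rw [show σ t = _ from concatAt_of_ge hjoin ht.1]
      exact sub_nonpos.2 (hfar _ ⟨sub_nonneg.2 ht.1, sub_le_iff_le_add'.2 ht.2⟩)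
  calc ρ ^ 2 / 2 ≤ lineIntegral f p g a b := sq_div_two_le_lineIntegral_tent hg hρ has hsb
    _ = lineIntegral f p σ a (b + T) := by
        rw [← lineIntegral_add_adjacent hab (le_add_of_nonneg_right hT) hf hp hσ, hvanish,
          add_zero, hgeodesic]
    _ ≤ η * r ^ 2 :=
        LoopIntegralsLE.lineIntegral_le (K := 1) h hr (by linarith) (by linarith) hσ hclosed hf hp

end NoShortDetour

namespace HasDetour

variable {X : Type u} [MetricSpace X] {m p q : X} {ρ : ℝ}

lemma of_dist_le_four_mul (hX : GeodesicSpace X) (hp : 3 * ρ ≤ dist p m) (hq : 3 * ρ ≤ dist q m)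
    (hpq : dist p q ≤ 4 * ρ) : HasDetour m ρ (4 * ρ) p q := by
  refine of_dist_le hX hpq ?_
  unfold gromovProduct
  linarith [dist_comm m p, dist_comm m q]

lemma trans_isGeodesicOn {c : ℝ → X} {A : Set ℝ} (hA : A.OrdConnected) (hc : IsGeodesicOn c A)
    (hm : ∀ t ∈ A, ρ ≤ dist (c t) m) {i j : ℝ} (hi : i ∈ A) (hj : j ∈ A) {T T' : ℝ}
    (hp : HasDetour m ρ T p (c i)) (hq : HasDetour m ρ T' q (c j)) :
    HasDetour m ρ (2 * (T + T') + dist p q) p q := by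
  refine ((hp.trans_lipschitzOnWith hA hc.lipschitzOnWith hm hi hj le_rfl).trans hq.symm).mono ?_
  rw [← hc i hi j hj]
  linarith [dist_triangle4 (c i) p q (c j), hp.dist_le, hq.dist_le, dist_comm p (c i)]

end HasDetour

namespace IsSlimTriangle

variable {X : Type u} [MetricSpace X] {m x y z : X} {gxy gyz gzx : ℝ → X} {s t ρ : ℝ}

lemma exists_hasDetour_of_mem_xy (hX : GeodesicSpace X)
    (h : IsSlimTriangle (4 * ρ) x y z gxy gyz gzx)
    (hyz : ∀ j ∈ Set.Icc 0 (dist y z), 3 * ρ ≤ dist (gyz j) m)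
    (hzx : ∀ i ∈ Set.Icc 0 (dist z x), 3 * ρ ≤ dist (gzx i) m)
    (ht : t ∈ Set.Icc 0 (dist x y)) (htm : 3 * ρ ≤ dist (gxy t) m) :
    (∃ j ∈ Set.Icc 0 (dist y z), HasDetour m ρ (4 * ρ) (gxy t) (gyz j)) ∨
      ∃ i ∈ Set.Icc 0 (dist z x), |t - (dist z x - i)| ≤ 4 * ρ ∧
        ∀ k ∈ Set.Icc 0 (dist z x), |i - k| ≤ 14 * ρ →
          HasDetour m ρ (18 * ρ) (gxy t) (gzx k) := by
  have hρ : 0 ≤ ρ := by linarith [h.nonneg]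
  obtain ⟨_, ⟨j, hj, rfl⟩ | ⟨i, hi, rfl⟩, hq⟩ := h.slim_xy t ht
  · exact .inl ⟨j, hj, HasDetour.of_dist_le_four_mul hX htm (hyz j hj) hq⟩
  · refine .inr ⟨i, hi, (h.geodesic_xy.abs_sub_le_dist h.geodesic_zx ht hi).trans hq,
      fun k hk hik => ?_⟩
    exact ((HasDetour.of_dist_le_four_mul hX htm (hzx i hi) hq).trans_lipschitzOnWith
      Set.ordConnected_Icc h.geodesic_zx.lipschitzOnWith (fun i hi => by linarith [hzx i hi])
      hi hk hik).mono (by linarith)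

lemma exists_hasDetour_of_mem_zx (hX : GeodesicSpace X)
    (h : IsSlimTriangle (4 * ρ) x y z gxy gyz gzx)
    (hyz : ∀ j ∈ Set.Icc 0 (dist y z), 3 * ρ ≤ dist (gyz j) m)
    {k : ℝ} (hk : k ∈ Set.Icc 0 (dist z x)) (hkm : 3 * ρ ≤ dist (gzx k) m) :
    (∃ j ∈ Set.Icc 0 (dist y z), HasDetour m ρ (4 * ρ) (gzx k) (gyz j)) ∨
      ∃ t ∈ Set.Icc 0 (dist x y), |t - (dist z x - k)| ≤ 4 * ρ ∧
        (3 * ρ ≤ dist (gxy t) m → HasDetour m ρ (4 * ρ) (gzx k) (gxy t)) := by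
  obtain ⟨_, ⟨t, ht, rfl⟩ | ⟨j, hj, rfl⟩, hq⟩ := h.slim_zx k hk
  · refine .inr ⟨t, ht, ?_, fun htm => HasDetour.of_dist_le_four_mul hX hkm htm hq⟩
    rw [dist_comm] at hq
    exact (h.geodesic_xy.abs_sub_le_dist h.geodesic_zx ht hk).trans hq
  · exact .inl ⟨j, hj, HasDetour.of_dist_le_four_mul hX hkm (hyz j hj) hq⟩

-- A slide of `14ρ` along `gzx` costs up to `4ρ` of progress at each of the two crossings between
-- `gxy` and `gzx`, which leaves `6ρ`.
lemma exists_hasDetour_forward (hX : GeodesicSpace X)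
    (h : IsSlimTriangle (4 * ρ) x y z gxy gyz gzx)
    (hyz : ∀ j ∈ Set.Icc 0 (dist y z), 3 * ρ ≤ dist (gyz j) m)
    (hzx : ∀ i ∈ Set.Icc 0 (dist z x), 3 * ρ ≤ dist (gzx i) m)
    (ht : t ∈ Set.Icc 0 (dist x y)) (htm : 3 * ρ ≤ dist (gxy t) m) :
    (∃ j ∈ Set.Icc 0 (dist y z), HasDetour m ρ (22 * ρ) (gxy t) (gyz j)) ∨
      ∃ u ∈ Set.Icc 0 (dist x y), t + 6 * ρ ≤ u ∧
        (3 * ρ ≤ dist (gxy u) m → HasDetour m ρ (22 * ρ) (gxy t) (gxy u)) := by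
  have hρ : 0 ≤ ρ := by linarith [h.nonneg]
  rcases h.exists_hasDetour_of_mem_xy hX hyz hzx ht htm with
    ⟨j, hj, hdetour⟩ | ⟨i, hi, hti, hslide⟩
  · exact .inl ⟨j, hj, hdetour.mono (by linarith)⟩
  rcases le_or_gt i (14 * ρ) with hiz | hiz
  · have hz : gyz (dist y z) = gzx 0 := h.geodesic_yz.2.1.trans h.geodesic_zx.1.symm
    have hdetour := hslide 0 (Set.left_mem_Icc.2 dist_nonneg)
      (by rwa [sub_zero, abs_of_nonneg hi.1])
    rw [← hz] at hdetour
    exact .inl ⟨_, Set.right_mem_Icc.2 dist_nonneg, hdetour.mono (by linarith)⟩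
  have hk : i - 14 * ρ ∈ Set.Icc 0 (dist z x) := ⟨by linarith, by linarith [hi.2]⟩
  have hdetour := hslide _ hk (by rw [sub_sub_cancel, abs_of_nonneg (by linarith)])
  rcases h.exists_hasDetour_of_mem_zx hX hyz hk (hzx _ hk) with
    ⟨j, hj, hkj⟩ | ⟨u, hu, huk, hku⟩
  · exact .inl ⟨j, hj, (hdetour.trans hkj).mono (by linarith)⟩
  · refine .inr ⟨u, hu, ?_, fun hum => (hdetour.trans (hku hum)).mono (by linarith)⟩
    linarith [(abs_le.1 hti).2, (abs_le.1 huk).1]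

lemma exists_hasDetour_backward (hX : GeodesicSpace X)
    (h : IsSlimTriangle (4 * ρ) x y z gxy gyz gzx)
    (hyz : ∀ j ∈ Set.Icc 0 (dist y z), 3 * ρ ≤ dist (gyz j) m)
    (hzx : ∀ i ∈ Set.Icc 0 (dist z x), 3 * ρ ≤ dist (gzx i) m)
    (ht : t ∈ Set.Icc 0 (dist x y)) (htρ : 6 * ρ ≤ t) (htm : 3 * ρ ≤ dist (gxy t) m) :
    (∃ j ∈ Set.Icc 0 (dist y z), HasDetour m ρ (22 * ρ) (gxy t) (gyz j)) ∨
      ∃ u ∈ Set.Icc 0 (dist x y), u + 6 * ρ ≤ t ∧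
        (3 * ρ ≤ dist (gxy u) m → HasDetour m ρ (22 * ρ) (gxy t) (gxy u)) := by
  have hρ : 0 ≤ ρ := by linarith [h.nonneg]
  rcases h.exists_hasDetour_of_mem_xy hX hyz hzx ht htm with
    ⟨j, hj, hdetour⟩ | ⟨i, hi, hti, hslide⟩
  · exact .inl ⟨j, hj, hdetour.mono (by linarith)⟩
  rcases le_or_gt (dist z x) (i + 14 * ρ) with hix | hix
  · have hx : gxy 0 = gzx (dist z x) := h.geodesic_xy.1.trans h.geodesic_zx.2.1.symm
    have hdetour := hslide _ (Set.right_mem_Icc.2 dist_nonneg)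
      (by rw [abs_sub_comm, abs_of_nonneg (sub_nonneg.2 hi.2)]; linarith)
    rw [← hx] at hdetour
    exact .inr ⟨0, Set.left_mem_Icc.2 dist_nonneg, by linarith,
      fun _ => hdetour.mono (by linarith)⟩
  have hk : i + 14 * ρ ∈ Set.Icc 0 (dist z x) := ⟨by linarith [hi.1], by linarith⟩
  have hdetour := hslide _ hk (by rw [sub_add_cancel_left, abs_neg, abs_of_nonneg (by linarith)])
  rcases h.exists_hasDetour_of_mem_zx hX hyz hk (hzx _ hk) with
    ⟨j, hj, hkj⟩ | ⟨u, hu, huk, hku⟩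
  · exact .inl ⟨j, hj, (hdetour.trans hkj).mono (by linarith)⟩
  · refine .inr ⟨u, hu, ?_, fun hum => (hdetour.trans (hku hum)).mono (by linarith)⟩
    linarith [(abs_le.1 hti).1, (abs_le.1 huk).2]

-- From `gxy (s - 3ρ)` and `gxy (s + 3ρ)` cross over to `gzx` and slide towards the other side of
-- `s`: either this leads back to `gxy` beyond `s`, or both points are joined to the third side
-- `gyz` by detours of length `22ρ`, which the segment of `gyz` between their ends completes to one
-- of length at most `2 * (22ρ + 22ρ) + 6ρ = 94ρ`.
theorem exists_hasDetour (hX : GeodesicSpace X) (h : IsSlimTriangle (4 * ρ) x y z gxy gyz gzx)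
    (hs : s ∈ Set.Icc 0 (dist x y))
    (hyz : ∀ j ∈ Set.Icc 0 (dist y z), 3 * ρ ≤ dist (gyz j) (gxy s))
    (hzx : ∀ i ∈ Set.Icc 0 (dist z x), 3 * ρ ≤ dist (gzx i) (gxy s)) :
    ∃ a ∈ Set.Icc 0 (dist x y), ∃ b ∈ Set.Icc 0 (dist x y), a + ρ ≤ s ∧ s + ρ ≤ b ∧
      HasDetour (gxy s) ρ (94 * ρ) (gxy b) (gxy a) := by
  have hρ : 0 ≤ ρ := by linarith [h.nonneg]
  have hs₀ : 3 * ρ ≤ s := by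
    have := hzx _ (Set.right_mem_Icc.2 dist_nonneg)
    rwa [h.geodesic_zx.2.1, h.geodesic_xy.dist_left hs] at this
  have hs₁ : s + 3 * ρ ≤ dist x y := by
    have := hyz _ (Set.left_mem_Icc.2 dist_nonneg)
    rw [h.geodesic_yz.1, dist_comm, h.geodesic_xy.dist_right hs] at this
    linarith
  have hfar : ∀ t ∈ Set.Icc 0 (dist x y), 3 * ρ ≤ |t - s| → 3 * ρ ≤ dist (gxy t) (gxy s) :=
    fun t ht hts => by rwa [h.geodesic_xy.isGeodesicOn t ht s hs]
  have ha : s - 3 * ρ ∈ Set.Icc 0 (dist x y) := ⟨by linarith, by linarith⟩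
  have hb : s + 3 * ρ ∈ Set.Icc 0 (dist x y) := ⟨by linarith, by linarith⟩
  rcases h.exists_hasDetour_forward hX hyz hzx ha
    (hfar _ ha (le_abs'.2 (.inl (by linarith)))) with ⟨j, hj, haj⟩ | ⟨u, hu, hau, hdetour⟩
  · rcases h.exists_hasDetour_backward hX hyz hzx hb (by linarith)
      (hfar _ hb (le_abs'.2 (.inr (by linarith)))) with ⟨k, hk, hbk⟩ | ⟨u, hu, hub, hdetour⟩
    · have hab : dist (gxy (s + 3 * ρ)) (gxy (s - 3 * ρ)) = 6 * ρ := by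
        rw [h.geodesic_xy.isGeodesicOn _ hb _ ha, abs_of_nonneg (by linarith)]
        ring
      exact ⟨_, ha, _, hb, by linarith, by linarith,
        (HasDetour.trans_isGeodesicOn Set.ordConnected_Icc h.geodesic_yz.isGeodesicOn
          (fun j hj => by linarith [hyz j hj]) hk hj hbk haj).mono (by linarith)⟩
    · exact ⟨u, hu, _, hb, by linarith, by linarith,
        (hdetour (hfar u hu (le_abs'.2 (.inl (by linarith))))).mono (by linarith)⟩
  · exact ⟨_, ha, u, hu, by linarith, by linarith,
      (hdetour (hfar u hu (le_abs'.2 (.inr (by linarith))))).symm.mono (by linarith)⟩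

lemma exists_dist_le_three_mul (hX : GeodesicSpace X)
    (h : IsSlimTriangle (4 * ρ) x y z gxy gyz gzx) (hρ : 0 < ρ) {η : ℝ} (hη : 2 * 188 ^ 2 * η < 1)
    (hloops : LoopIntegralsLE X 1 η (188 * ρ)) (hs : s ∈ Set.Icc 0 (dist x y)) :
    ∃ q ∈ gyz '' Set.Icc 0 (dist y z) ∪ gzx '' Set.Icc 0 (dist z x),
      dist (gxy s) q ≤ 3 * ρ := by
  by_contra! hfar
  obtain ⟨a, ha, b, hb, has, hsb, hdetour⟩ := h.exists_hasDetour hX hs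
    (fun j hj => by simpa only [dist_comm] using (hfar _ (.inl ⟨j, hj, rfl⟩)).le)
    (fun i hi => by simpa only [dist_comm] using (hfar _ (.inr ⟨i, hi, rfl⟩)).le)
  have hle := hdetour.sq_div_two_le
    (h.geodesic_xy.isGeodesicOn.mono (Set.Icc_subset_Icc ha.1 hb.2)) hρ.le has hsb
    (by positivity) (by linarith) hloops
  nlinarith [mul_lt_mul_of_pos_right hη (sq_pos_of_pos hρ)]

theorem three_mul_of_loopIntegralsLE (hX : GeodesicSpace X)
    (h : IsSlimTriangle (4 * ρ) x y z gxy gyz gzx) (hρ : 0 < ρ) {η : ℝ} (hη : 2 * 188 ^ 2 * η < 1)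
    (hloops : LoopIntegralsLE X 1 η (188 * ρ)) :
    IsSlimTriangle (3 * ρ) x y z gxy gyz gzx :=
  ⟨h.geodesic_xy, h.geodesic_yz, h.geodesic_zx,
    fun _ => h.exists_dist_le_three_mul hX hρ hη hloops,
    fun _ => h.rotate.exists_dist_le_three_mul hX hρ hη hloops,
    fun _ => h.rotate.rotate.exists_dist_le_three_mul hX hρ hη hloops⟩

end IsSlimTriangle

lemma isSlimTriangle_perimeter {X : Type*} [MetricSpace X] {x y z : X} {gxy gyz gzx : ℝ → X}
    (hxy : IsGeodesicSeg x y gxy) (hyz : IsGeodesicSeg y z gyz) (hzx : IsGeodesicSeg z x gzx) :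
    IsSlimTriangle (dist x y + dist y z + dist z x) x y z gxy gyz gzx := by
  have hxy₀ : 0 ≤ dist x y := dist_nonneg
  have hyz₀ : 0 ≤ dist y z := dist_nonneg
  have hzx₀ : 0 ≤ dist z x := dist_nonneg
  refine ⟨hxy, hyz, hzx, fun s hs => ⟨_, .inl ⟨0, Set.left_mem_Icc.2 hyz₀, rfl⟩, ?_⟩,
    fun s hs => ⟨_, .inl ⟨0, Set.left_mem_Icc.2 hzx₀, rfl⟩, ?_⟩,
    fun s hs => ⟨_, .inl ⟨0, Set.left_mem_Icc.2 hxy₀, rfl⟩, ?_⟩⟩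
  · rw [hyz.1, hxy.dist_right hs]
    linarith [hs.1]
  · rw [hzx.1, hyz.dist_right hs]
    linarith [hs.1]
  · rw [hxy.1, hzx.dist_right hs]
    linarith [hs.1]

lemma of_forall_mul_of_monotone {P : ℝ → Prop} {r θ E : ℝ} (hP : Monotone P) (hr : 0 < r)
    (hθ : 0 ≤ θ) (hθ₁ : θ < 1) (hstep : ∀ a, r ≤ a → P a → P (θ * a)) (hE : P E) : P r := by
  have hpow : ∀ n : ℕ, P (max r (θ ^ n * E)) := fun n => by
    induction n with
    | zero => exact hP (by simp) hE
    | succ n ih =>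
      refine hP ?_ (hstep _ (le_max_left _ _) ih)
      rw [mul_max_of_nonneg _ _ hθ, pow_succ', mul_assoc]
      exact max_le_max_right _ (mul_le_of_le_one_left hr.le hθ₁.le)
  have htendsto : Tendsto (fun n : ℕ => θ ^ n * E) atTop (nhds 0) := by
    simpa using (tendsto_pow_atTop_nhds_zero_of_lt_one hθ hθ₁).mul_const E
  obtain ⟨n, hn⟩ := (htendsto.eventually_le_const hr).exists
  simpa [hn] using hpow n

theorem gromovHyperbolic_of_loopIntegralsLE {X : Type u} [MetricSpace X] (hX : GeodesicSpace X)
    {r₀ η : ℝ} (hr₀ : 0 < r₀) (hη : 2 * 188 ^ 2 * η < 1)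
    (h : ∀ r, r₀ ≤ r → LoopIntegralsLE X 1 η r) : GromovHyperbolic X := by
  refine gromovHyperbolic_iff_isSlimTriangle.2 ⟨r₀, hr₀.le, fun x y z gxy gyz gzx hxy hyz hzx =>
    of_forall_mul_of_monotone (P := fun δ => IsSlimTriangle δ x y z gxy gyz gzx) (θ := 3 / 4)
      (fun _ _ hab ha => ha.mono hab) hr₀ (by norm_num) (by norm_num) (fun δ hδ hslim => ?_)
      (isSlimTriangle_perimeter hxy hyz hzx)⟩
  have hslim' : IsSlimTriangle (4 * (δ / 4)) x y z gxy gyz gzx := by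
    rwa [mul_div_cancel₀ δ four_ne_zero]
  exact (hslim'.three_mul_of_loopIntegralsLE hX (by linarith) hη (h _ (by linarith))).mono
    (by linarith)

/-- Lemma 4.2: a geodesic metric space `X` is Gromov hyperbolic if
and only if for all `λ, η > 0` there is `r₀ > 0` such that for all `r ≥ r₀`, every
`λr`-Lipschitz loop `γ : [0,1] → X` and all `λ/r`-Lipschitz functions `f, π : X → ℝ`
satisfy `∫₀¹ f(γ(s)) (π∘γ)'(s) ds ≤ η`. -/
theorem degenerate_loops_iff_hyperbolic {X : Type u} [MetricSpace X]
    (hX : GeodesicSpace X) :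
    GromovHyperbolic X ↔
      ∀ lam η : ℝ, 0 < lam → 0 < η → ∃ r₀ > (0:ℝ), ∀ r : ℝ, r₀ ≤ r →
        ∀ γ : ℝ → X, LipschitzOnWith (Real.toNNReal (lam * r)) γ (Set.Icc 0 1) →
          γ 1 = γ 0 →
          ∀ f p : X → ℝ, LipschitzWith (Real.toNNReal (lam / r)) f →
            LipschitzWith (Real.toNNReal (lam / r)) p →
            (∫ s in (0:ℝ)..1, f (γ s) * deriv (fun t => p (γ t)) s) ≤ η := by
  refine ⟨fun h lam η hlam hη => h.exists_loopIntegralsLE hX hlam hη, fun h => ?_⟩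
  obtain ⟨r₀, hr₀, hloops⟩ := h 1 (1 / 100000) one_pos (by norm_num)
  exact gromovHyperbolic_of_loopIntegralsLE hX hr₀ (by norm_num) hloops

end SharpIsop
end

section
/- Let V be a 2-dimensional real normed space with unit ball B_V and unit sphere ∂B_V, let Y be a metric space and ι: V → Y an isometric embedding, and let γ:[0,1]→V be a Lipschitz loop with γ(0)=γ(1) that parametrizes ∂B_V injectively on [0,1). Then every singular Lipschitz disc φ: D² → Y bounding ι∘γ satisfies sup_{w ∈ D²} dist(φ(w), ι(∂B_V)) ≥ 1/J(V). -/
/-!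
Suppose the disc stays at distance less than `t` from `ι(∂B_V)`, where `t J(V) < 1`. The points of
`∂B_V` within `t` of a given `φ(w)` have diameter less than `2t`, so they lie in an open ball of
radius `1`. In dimension two such points do not have `0` in their convex hull: if `u` is Birkhoff
orthogonal to the centre `c`, moving from `p` to `p - c` cannot decrease the norm when the
`c`-coordinate of `p` in the basis `u, c` is nonpositive, so these points lie in an open half-plane
bounded by the line `ℝu`. A partition of unity then gives a continuous `f : D² → V ∖ {0}` with
`f(w)` in that hull. On `∂D²` both `f` and `γ` lie in the hull, so the segment between them misses
`0`; as `f` has a continuous argument on `D²`, the loop `γ` has a continuous argument taking the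
same value at `0` and `1`. By the universal chord theorem `γ(s)` and `γ(s + 1/2)` have equal
arguments for some `s`, so they coincide, contradicting injectivity.
-/

open scoped NNReal ENNReal
open MeasureTheory Filter

universe u v

namespace SharpIsop

/-- Jung's constant of a metric space: the infimum of all `r ≥ 0` such that every
subset of diameter at most `2` is contained in some closed ball of radius `r`. -/
noncomputable def jungConstant (V : Type u) [PseudoMetricSpace V] : ℝ :=
  sInf {r : ℝ | 0 ≤ r ∧
    ∀ A : Set V, EMetric.diam A ≤ 2 → ∃ c : V, A ⊆ Metric.closedBall c r}

section

open Set Metric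
open scoped Pointwise Convex

section BirkhoffOrthogonality

variable {V : Type u} [NormedAddCommGroup V] [NormedSpace ℝ V] {u c : V}

/-- Birkhoff–James orthogonality of `u` to `c`: among the points of the line through `u` in the
direction `c`, none is closer to the origin than `u`. It replaces orthogonality in a general
normed space, and is not symmetric. -/
def BirkhoffOrthogonal (u c : V) : Prop := ∀ s : ℝ, ‖u‖ ≤ ‖u + s • c‖

lemma exists_birkhoffOrthogonal_notMem_span [ProperSpace V]
    (hc : Submodule.span ℝ {c} ≠ ⊤) :
    ∃ u, BirkhoffOrthogonal u c ∧ u ∉ Submodule.span ℝ {c} := by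
  obtain ⟨v, -, hv⟩ := SetLike.exists_of_lt hc.lt_top
  obtain ⟨y, hy, hvy⟩ := (Submodule.closed_of_finiteDimensional
    (Submodule.span ℝ {c})).exists_infDist_eq_dist ⟨0, Submodule.zero_mem _⟩ v
  refine ⟨v - y, fun s ↦ ?_, fun h ↦ hv ((Submodule.sub_mem_iff_left _ hy).1 h)⟩
  have hys : y - s • c ∈ Submodule.span ℝ {c} :=
    Submodule.sub_mem _ hy (Submodule.smul_mem _ s (Submodule.mem_span_singleton_self c))
  calc ‖v - y‖ = infDist v (Submodule.span ℝ {c}) := by rw [hvy, dist_eq_norm]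
    _ ≤ dist v (y - s • c) := infDist_le_dist_of_mem hys
    _ = ‖v - y + s • c‖ := by rw [dist_eq_norm, sub_sub_eq_add_sub, sub_add_eq_add_sub]

namespace BirkhoffOrthogonal

lemma smul_left (h : BirkhoffOrthogonal u c) (a : ℝ) : BirkhoffOrthogonal (a • u) c := by
  intro s
  obtain rfl | ha := eq_or_ne a 0
  · simp
  · calc ‖a • u‖ ≤ ‖a‖ * ‖u + (s / a) • c‖ := by rw [norm_smul]; gcongr; exact h _
      _ = ‖a • u + s • c‖ := by rw [← norm_smul, smul_add, smul_smul, mul_div_cancel₀ _ ha]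

lemma antitoneOn (h : BirkhoffOrthogonal u c) :
    AntitoneOn (fun s : ℝ ↦ ‖u + s • c‖) (Iic 0) := by
  intro s _ t ht hst
  have hconv : ConvexOn ℝ univ fun s : ℝ ↦ ‖u + s • c‖ := by
    simpa [Function.comp_def, AffineMap.lineMap_apply, add_comm] using
      convexOn_univ_norm.comp_affineMap (AffineMap.lineMap (k := ℝ) u (u + c))
  calc ‖u + t • c‖ ≤ max ‖u + s • c‖ ‖u + (0 : ℝ) • c‖ :=
        hconv.le_max_of_mem_Icc (mem_univ s) (mem_univ 0) ⟨hst, ht⟩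
    _ = ‖u + s • c‖ := max_eq_left (by simpa using h s)

end BirkhoffOrthogonal

/-- `f` is the coordinate along `c` with respect to a basis `u, c` such that `u` is
Birkhoff orthogonal to `c`. -/
lemma exists_linearMap_forall_norm_le_norm_sub (hdim : Module.finrank ℝ V = 2) (c : V) :
    ∃ f : V →ₗ[ℝ] ℝ, ∀ p, f p ≤ 0 → ‖p‖ ≤ ‖p - c‖ := by
  obtain rfl | hc := eq_or_ne c 0
  · exact ⟨0, by simp⟩
  have hspan : Submodule.span ℝ {c} ≠ ⊤ := fun h ↦ by
    have := finrank_span_singleton (K := ℝ) hc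
    rw [h, finrank_top] at this
    omega
  have : FiniteDimensional ℝ V := Module.finite_of_finrank_pos (by omega)
  have : ProperSpace V := FiniteDimensional.proper ℝ V
  obtain ⟨u, huc, hu⟩ := exists_birkhoffOrthogonal_notMem_span hspan
  have hli : LinearIndependent ℝ ![c, u] :=
    (LinearIndependent.pair_iff' hc).2 fun a ha ↦ hu (Submodule.mem_span_singleton.2 ⟨a, ha⟩)
  let b := basisOfLinearIndependentOfCardEqFinrank hli (by simp [hdim])
  refine ⟨b.coord 0, fun p hp ↦ ?_⟩
  have hdecomp : p = b.coord 1 p • u + b.coord 0 p • c := by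
    simpa [b, Fin.sum_univ_two, add_comm] using (b.sum_repr p).symm
  have hsub : p - c = b.coord 1 p • u + (b.coord 0 p - 1) • c := by
    nth_rw 1 [hdecomp]
    module
  rw [hsub]
  nth_rw 1 [hdecomp]
  have hle : b.coord 0 p - 1 ≤ b.coord 0 p := sub_le_self _ zero_le_one
  exact (huc.smul_left _).antitoneOn (hle.trans hp) hp hle

lemma zero_notMem_convexHull_ball_diff_ball (hdim : Module.finrank ℝ V = 2) (c : V) (r : ℝ) :
    (0 : V) ∉ convexHull ℝ (ball c r \ ball 0 r) := by
  obtain ⟨f, hf⟩ := exists_linearMap_forall_norm_le_norm_sub hdim c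
  have hsub : ball c r \ ball 0 r ⊆ {p | 0 < f p} := by
    rintro p ⟨hpc, hp0⟩
    rw [mem_ball_iff_norm] at hpc
    rw [mem_ball_zero_iff, not_lt] at hp0
    by_contra hfp
    linarith [hf p (not_lt.1 hfp)]
  intro h0
  simpa using convexHull_min hsub (convex_halfSpace_gt f.isLinear 0) h0

end BirkhoffOrthogonality

section Jung

lemma exists_subset_ball_of_jungConstant_lt {V : Type u} [PseudoMetricSpace V] [Nonempty V]
    {r : ℝ} (hr : jungConstant V < r) {A : Set V} (hA : ediam A ≤ 2) : ∃ c, A ⊆ ball c r := by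
  have two_mem : (2 : ℝ) ∈ {r : ℝ | 0 ≤ r ∧
      ∀ A : Set V, ediam A ≤ 2 → ∃ c : V, A ⊆ closedBall c r} := by
    refine ⟨zero_le_two, fun A hA ↦ ?_⟩
    obtain rfl | ⟨a, ha⟩ := A.eq_empty_or_nonempty
    · exact ⟨Classical.arbitrary V, empty_subset _⟩
    · refine ⟨a, fun x hx ↦ ?_⟩
      have h : edist x a ≤ ENNReal.ofReal 2 := by
        simpa using (edist_le_ediam_of_mem hx ha).trans hA
      exact (edist_le_ofReal zero_le_two).1 h
  obtain ⟨ρ, ⟨-, hρ⟩, hρr⟩ := exists_lt_of_csInf_lt ⟨2, two_mem⟩ hr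
  obtain ⟨c, hc⟩ := hρ A hA
  exact ⟨c, hc.trans (closedBall_subset_ball hρr)⟩

variable {V : Type u} [NormedAddCommGroup V] [NormedSpace ℝ V]

lemma exists_subset_ball_of_mul_jungConstant_lt {t r : ℝ} (ht : 0 < t)
    (hr : t * jungConstant V < r) {A : Set V} (hA : ∀ p ∈ A, ∀ q ∈ A, dist p q ≤ 2 * t) :
    ∃ c, A ⊆ ball c r := by
  have hdiam : ediam (t⁻¹ • A) ≤ 2 := by
    rw [ediam_le_iff]
    rintro _ ⟨p, hp, rfl⟩ _ ⟨q, hq, rfl⟩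
    rw [edist_dist, dist_smul₀, Real.norm_of_nonneg (by positivity), ← ENNReal.ofReal_ofNat 2]
    refine ENNReal.ofReal_le_ofReal ((inv_mul_le_iff₀ ht).2 ?_)
    linarith [hA p hp q hq]
  obtain ⟨c, hc⟩ :=
    exists_subset_ball_of_jungConstant_lt ((lt_div_iff₀' ht).2 hr) hdiam
  refine ⟨t • c, ?_⟩
  calc A ⊆ t • ball c (r / t) := by
        simpa only [inv_inv] using (smul_set_subset_iff₀ (inv_ne_zero ht.ne')).1 hc
    _ = ball (t • c) r := by
      rw [_root_.smul_ball ht.ne', Real.norm_of_nonneg ht.le, mul_div_cancel₀ _ ht.ne']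

lemma zero_notMem_convexHull_sphere_inter_preimage_ball (hdim : Module.finrank ℝ V = 2)
    {Y : Type v} [PseudoMetricSpace Y] {ι : V → Y} (hι : Isometry ι) {t : ℝ} (ht : 0 < t)
    (htJ : t * jungConstant V < 1) (y : Y) :
    (0 : V) ∉ convexHull ℝ (sphere 0 1 ∩ ι ⁻¹' ball y t) := by
  obtain ⟨c, hc⟩ : ∃ c, sphere (0 : V) 1 ∩ ι ⁻¹' ball y t ⊆ ball c 1 := by
    refine exists_subset_ball_of_mul_jungConstant_lt ht htJ ?_
    rintro p ⟨-, hp⟩ q ⟨-, hq⟩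
    rw [mem_preimage, mem_ball] at hp hq
    linarith [hι.dist_eq p q, dist_triangle_right (ι p) (ι q) y]
  refine fun h0 ↦ zero_notMem_convexHull_ball_diff_ball hdim c 1 (convexHull_mono ?_ h0)
  exact subset_sdiff.2 ⟨hc, sphere_disjoint_ball.mono_left inter_subset_left⟩

end Jung

lemma exists_continuous_mem_convexHull_inter_preimage_ball {X E : Type*} {Y : Type v}
    [TopologicalSpace X] [NormalSpace X] [ParacompactSpace X] [PseudoMetricSpace Y]
    [AddCommGroup E] [Module ℝ E] [TopologicalSpace E] [ContinuousAdd E] [ContinuousSMul ℝ E]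
    {S : Set E} {ι : E → Y} {φ : X → Y} (hφ : Continuous φ) {t : ℝ}
    (hne : ∀ x, (S ∩ ι ⁻¹' ball (φ x) t).Nonempty) :
    ∃ g : C(X, E), ∀ x, g x ∈ convexHull ℝ (S ∩ ι ⁻¹' ball (φ x) t) := by
  refine exists_continuous_forall_mem_convex_of_local_const (fun x ↦ convex_convexHull ℝ _)
    fun x ↦ ?_
  obtain ⟨v, hvS, hv⟩ := hne x
  have hnear : ∀ᶠ z in nhds x, ι v ∈ ball (φ z) t := by
    simp only [mem_ball']
    exact (hφ.dist continuous_const).continuousAt.eventually_lt_const (mem_ball'.1 hv)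
  exact ⟨v, hnear.mono fun z hz ↦ subset_convexHull ℝ _ ⟨hvS, hz⟩⟩

section Winding

/-- The case `n = 2` of the universal chord theorem. -/
lemma exists_eq_add_half {f : ℝ → ℝ} (hf : ContinuousOn f (Icc 0 1)) (h01 : f 0 = f 1) :
    ∃ s ∈ Ico (0 : ℝ) (1 / 2), f s = f (s + 1 / 2) := by
  let d : ℝ → ℝ := fun s ↦ f s - f (s + 1 / 2)
  have hd : ContinuousOn d (uIcc 0 (1 / 2)) := by
    rw [uIcc_of_le (by norm_num)]
    refine (hf.mono (Icc_subset_Icc_right (by norm_num))).sub (hf.comp (by fun_prop) ?_)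
    intro s hs
    exact ⟨by linarith [hs.1], by linarith [hs.2]⟩
  have hanti : d (1 / 2) = -d 0 := by
    simp only [d, zero_add, add_halves, h01, neg_sub]
  have hzero : (0 : ℝ) ∈ uIcc (d 0) (d (1 / 2)) := by
    rw [hanti, mem_uIcc]
    rcases le_total (d 0) 0 with h | h
    · exact .inl ⟨h, neg_nonneg.2 h⟩
    · exact .inr ⟨neg_nonpos.2 h, h⟩
  obtain ⟨s, hs, hds⟩ := intermediate_value_uIcc hd hzero
  rw [uIcc_of_le (by norm_num)] at hs
  obtain rfl | hlt := hs.2.eq_or_lt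
  · refine ⟨0, by norm_num, ?_⟩
    rw [hanti, neg_eq_zero] at hds
    exact sub_eq_zero.1 hds
  · exact ⟨s, ⟨hs.1, hlt⟩, sub_eq_zero.1 hds⟩

lemma sameRay_exp_of_im_eq {z w : ℂ} (h : z.im = w.im) :
    SameRay ℝ (Complex.exp z) (Complex.exp w) := by
  have hzw : z = (z.re - w.re : ℝ) + w := by
    apply Complex.ext <;> simp [h]
  rw [hzw, Complex.exp_add, ← Complex.ofReal_exp, ← Complex.real_smul]
  exact SameRay.sameRay_nonneg_smul_left _ (Real.exp_nonneg _)

lemma div_mem_slitPlane_of_zero_notMem_segment {z w : ℂ} (h : 0 ∉ [z -[ℝ] w]) :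
    w / z ∈ Complex.slitPlane := by
  have hz : z ≠ 0 := fun hz ↦ h (hz ▸ left_mem_segment ℝ z w)
  rw [mem_segment_iff_sameRay, zero_sub, sub_zero] at h
  rw [Complex.mem_slitPlane_iff]
  contrapose! h
  have hw : w = (-(w / z).re) • -z := by
    have hre : ((w / z).re : ℂ) = w / z := Complex.ext rfl h.2.symm
    rw [neg_smul_neg, Complex.real_smul, hre, div_mul_cancel₀ _ hz]
  rw [hw]
  exact SameRay.sameRay_nonneg_smul_right _ (neg_nonneg.2 h.1)

variable {X : Type*} [TopologicalSpace X] [SimplyConnectedSpace X] [LocallyPathConnectedSpace X]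

lemma exists_sameRay_add_half_complex {c : ℝ → X} (hc : ContinuousOn c (Icc 0 1))
    (hc01 : c 0 = c 1) {f : X → ℂ} (hf : Continuous f) (hf0 : ∀ x, f x ≠ 0) {g : ℝ → ℂ}
    (hg : ContinuousOn g (Icc 0 1)) (hg01 : g 0 = g 1)
    (hfg : ∀ s ∈ Icc (0 : ℝ) 1, 0 ∉ [f (c s) -[ℝ] g s]) :
    ∃ s ∈ Ico (0 : ℝ) (1 / 2), SameRay ℝ (g s) (g (s + 1 / 2)) := by
  obtain ⟨L, ⟨-, hL⟩, -⟩ : ∃! L : C(X, ℂ),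
      L (c 0) = Complex.log (f (c 0)) ∧ Complex.exp ∘ L = f :=
    Complex.isCoveringMapOn_exp.existsUnique_continuousMap_lifts ⟨f, hf⟩
      (Complex.exp_log (hf0 (c 0))) hf0
  have hexpL : ∀ x, Complex.exp (L x) = f x := congrFun hL
  let M : ℝ → ℂ := fun s ↦ L (c s) + Complex.log (g s / f (c s))
  have hslit : ∀ s ∈ Icc (0 : ℝ) 1, g s / f (c s) ∈ Complex.slitPlane :=
    fun s hs ↦ div_mem_slitPlane_of_zero_notMem_segment (hfg s hs)
  have hM : ContinuousOn M (Icc 0 1) :=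
    (L.continuous.comp_continuousOn hc).add
      ((hg.div (hf.comp_continuousOn hc) fun s _ ↦ hf0 _).clog hslit)
  have hexpM : ∀ s ∈ Icc (0 : ℝ) 1, Complex.exp (M s) = g s := fun s hs ↦ by
    rw [Complex.exp_add, hexpL, Complex.exp_log (Complex.slitPlane_ne_zero (hslit s hs)),
      mul_div_cancel₀ _ (hf0 _)]
  obtain ⟨s, hs, him⟩ := exists_eq_add_half (f := fun s ↦ (M s).im)
    (Complex.continuous_im.comp_continuousOn hM) (by simp only [M, hc01, hg01])
  refine ⟨s, hs, ?_⟩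
  rw [← hexpM s ⟨hs.1, by linarith [hs.2]⟩,
    ← hexpM (s + 1 / 2) ⟨by linarith [hs.1], by linarith [hs.2]⟩]
  exact sameRay_exp_of_im_eq him

lemma exists_sameRay_add_half {V : Type u} [NormedAddCommGroup V] [NormedSpace ℝ V]
    (hdim : Module.finrank ℝ V = 2) {c : ℝ → X} (hc : ContinuousOn c (Icc 0 1))
    (hc01 : c 0 = c 1) {f : X → V} (hf : Continuous f) (hf0 : ∀ x, f x ≠ 0) {g : ℝ → V}
    (hg : ContinuousOn g (Icc 0 1)) (hg01 : g 0 = g 1)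
    (hfg : ∀ s ∈ Icc (0 : ℝ) 1, 0 ∉ [f (c s) -[ℝ] g s]) :
    ∃ s ∈ Ico (0 : ℝ) (1 / 2), SameRay ℝ (g s) (g (s + 1 / 2)) := by
  have : FiniteDimensional ℝ V := Module.finite_of_finrank_pos (by omega)
  let e : V ≃L[ℝ] ℂ := .ofFinrankEq (by rw [hdim, Complex.finrank_real_complex])
  have hfg' : ∀ s ∈ Icc (0 : ℝ) 1, 0 ∉ [e (f (c s)) -[ℝ] e (g s)] := by
    simpa only [mem_segment_iff_sameRay, zero_sub, sub_zero, ← map_neg,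
      ← ContinuousLinearEquiv.coe_toLinearEquiv, SameRay.sameRay_map_iff] using hfg
  obtain ⟨s, hs, hray⟩ := exists_sameRay_add_half_complex hc hc01 (e.continuous.comp hf)
    (fun x ↦ e.map_ne_zero_iff.2 (hf0 x)) (e.continuous.comp_continuousOn hg)
    (congrArg e hg01) hfg'
  exact ⟨s, hs, (SameRay.sameRay_map_iff e.toLinearEquiv).1 hray⟩

end Winding

lemma exists_continuousMap_zero_notMem_segment {V : Type u} [NormedAddCommGroup V]
    [NormedSpace ℝ V] (hdim : Module.finrank ℝ V = 2) {Y : Type v} [PseudoMetricSpace Y]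
    {ι : V → Y} (hι : Isometry ι) {X : Type*} [TopologicalSpace X] [NormalSpace X]
    [ParacompactSpace X] {φ : X → Y} (hφ : Continuous φ) {t : ℝ} (htJ : t * jungConstant V < 1)
    (hφt : ∀ x, infDist (φ x) (ι '' sphere (0 : V) 1) < t) :
    ∃ f : C(X, V), (∀ x, f x ≠ 0) ∧
      ∀ x, ∀ v ∈ sphere (0 : V) 1, ι v = φ x → 0 ∉ [f x -[ℝ] v] := by
  have ht : X → 0 < t := fun x ↦ infDist_nonneg.trans_lt (hφt x)
  have hsphere : (sphere (0 : V) 1).Nonempty := by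
    have : Nontrivial V := Module.nontrivial_of_finrank_pos (R := ℝ) (by omega)
    exact NormedSpace.sphere_nonempty.2 zero_le_one
  have hnear : ∀ x, (sphere (0 : V) 1 ∩ ι ⁻¹' ball (φ x) t).Nonempty := fun x ↦ by
    obtain ⟨_, ⟨v, hv, rfl⟩, hvt⟩ := (infDist_lt_iff (hsphere.image ι)).1 (hφt x)
    exact ⟨v, hv, mem_ball'.2 hvt⟩
  have hhull : ∀ x, (0 : V) ∉ convexHull ℝ (sphere 0 1 ∩ ι ⁻¹' ball (φ x) t) := fun x ↦
    zero_notMem_convexHull_sphere_inter_preimage_ball hdim hι (ht x) htJ (φ x)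
  obtain ⟨f, hf⟩ := exists_continuous_mem_convexHull_inter_preimage_ball hφ hnear
  refine ⟨f, fun x hx ↦ hhull x (hx ▸ hf x), fun x v hv hvx h0 ↦ hhull x ?_⟩
  have hvt : ι v ∈ ball (φ x) t := hvx ▸ mem_ball_self (ht x)
  exact (convex_convexHull ℝ _).segment_subset (hf x) (subset_convexHull ℝ _ ⟨hv, hvt⟩) h0

theorem fillrad_sphere_lower_bound_general {V : Type u} [NormedAddCommGroup V] [NormedSpace ℝ V]
    (hdim : Module.finrank ℝ V = 2) {Y : Type v} [PseudoMetricSpace Y] {ι : V → Y}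
    (hι : Isometry ι) {X : Type*} [TopologicalSpace X] [SimplyConnectedSpace X]
    [LocallyPathConnectedSpace X] [NormalSpace X] [ParacompactSpace X] {c : ℝ → X}
    (hc : ContinuousOn c (Icc 0 1)) (hc01 : c 0 = c 1) {γ : ℝ → V}
    (hsphere : MapsTo γ (Icc 0 1) (sphere 0 1))
    (hγ : ∀ s ∈ Ico (0 : ℝ) (1 / 2), γ s ≠ γ (s + 1 / 2)) {φ : X → Y} (hφ : Continuous φ)
    (hφc : ∀ s ∈ Icc (0 : ℝ) 1, φ (c s) = ι (γ s)) {R : ℝ}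
    (hR : ∀ x, infDist (φ x) (ι '' sphere (0 : V) 1) ≤ R) : 1 / jungConstant V ≤ R := by
  by_contra! hlt
  have hR0 : 0 ≤ R := infDist_nonneg.trans (hR (c 0))
  have hJ : 0 < jungConstant V := one_div_pos.1 (hR0.trans_lt hlt)
  obtain ⟨t, hRt, htJ⟩ := exists_between hlt
  obtain ⟨f, hf0, hf⟩ := exists_continuousMap_zero_notMem_segment hdim hι hφ
    ((lt_div_iff₀ hJ).1 htJ) fun x ↦ (hR x).trans_lt hRt
  have hγcont : ContinuousOn γ (Icc 0 1) :=
    hι.isUniformInducing.isInducing.continuousOn_iff.2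
      ((hφ.comp_continuousOn hc).congr fun s hs ↦ (hφc s hs).symm)
  have hγ01 : γ 0 = γ 1 := hι.injective <| by
    rw [← hφc 0 (by simp), ← hφc 1 (by simp), hc01]
  obtain ⟨s, hs, hray⟩ := exists_sameRay_add_half hdim hc hc01 f.continuous hf0 hγcont hγ01
    fun s hs ↦ hf (c s) (γ s) (hsphere hs) (hφc s hs).symm
  refine hγ s hs (hray.eq_of_norm_eq ?_)
  rw [mem_sphere_zero_iff_norm.1 (hsphere ⟨hs.1, by linarith [hs.2]⟩),
    mem_sphere_zero_iff_norm.1 (hsphere ⟨by linarith [hs.1], by linarith [hs.2]⟩)]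

section Disc

lemma convex_D2 : Convex ℝ D2 := by
  have hsq : ConvexOn ℝ univ fun x : ℝ ↦ x ^ 2 := even_two.convexOn_pow
  have h := (hsq.comp_linearMap (LinearMap.fst ℝ ℝ ℝ)).add
    (hsq.comp_linearMap (LinearMap.snd ℝ ℝ ℝ))
  simpa [D2] using h.convex_le 1

instance : SimplyConnectedSpace D2 :=
  have : ContractibleSpace D2 := convex_D2.contractibleSpace ⟨0, by simp [D2]⟩
  inferInstance

instance : LocallyPathConnectedSpace D2 := convex_D2.locallyPathConnectedSpace

/-- The boundary circle of `D2`, as the loop along which `BoundsLoop` prescribes a disc. -/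
noncomputable def circleLoop (s : ℝ) : D2 :=
  ⟨(Real.cos (2 * Real.pi * s), Real.sin (2 * Real.pi * s)), (Real.cos_sq_add_sin_sq _).le⟩

lemma continuous_circleLoop : Continuous circleLoop := by
  unfold circleLoop
  fun_prop

lemma circleLoop_zero_eq_one : circleLoop 0 = circleLoop 1 := by
  simp [circleLoop]

end Disc

end

/-- Proposition 6.3: let `V` be a `2`-dimensional normed space,
`ι : V → Y` an isometric embedding into a metric space `Y`, and `γ` a Lipschitz loop
parametrizing the unit sphere `∂B_V` injectively on `[0,1)`.  Then every singular
Lipschitz disc `φ : D² → Y` bounding `ι ∘ γ` satisfies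
`sup_{w ∈ D²} dist(φ(w), ι(∂B_V)) ≥ 1/J(V)`  (stated here as: any upper bound `R`
of the distances `dist(φ(w), ι(∂B_V))`, `w ∈ D²`, satisfies `1/J(V) ≤ R`). -/
theorem fillrad_sphere_lower_bound {V : Type u} [NormedAddCommGroup V]
    [NormedSpace ℝ V] (hdim : Module.finrank ℝ V = 2)
    {Y : Type v} [MetricSpace Y] (ι : V → Y) (hι : Isometry ι)
    (γ : ℝ → V) (hγ : IsLipLoop γ)
    (hsphere : γ '' Set.Icc 0 1 = Metric.sphere (0:V) 1)
    (hinj : Set.InjOn γ (Set.Ico 0 1))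
    (φ : ℝ × ℝ → Y) (hφ : BoundsLoop φ (fun s => ι (γ s)))
    (R : ℝ) (hR : ∀ w ∈ D2, Metric.infDist (φ w) (ι '' Metric.sphere (0:V) 1) ≤ R) :
    1 / jungConstant V ≤ R := by
  obtain ⟨⟨K, hK⟩, hφγ⟩ := hφ
  refine fillrad_sphere_lower_bound_general hdim hι continuous_circleLoop.continuousOn
    circleLoop_zero_eq_one (Set.mapsTo_iff_image_subset.2 hsphere.subset)
    (fun s hs h ↦ ?_) hK.continuousOn.domRestrict hφγ fun x ↦ hR x x.2
  have := hinj ⟨hs.1, by linarith [hs.2]⟩ ⟨by linarith [hs.1], by linarith [hs.2]⟩ h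
  linarith

end SharpIsop
end

section
/- For every 2-dimensional real normed space V one has J(V)·length(∂B_V) ≤ 32/3; equivalently, α_V := 1/(J(V)·length(∂B_V)) ≥ 3/32. Moreover, for V = ℝ² with the supremum norm one has J(V) = 1 and length(∂B_V) = 8, so α_V = 1/8. Consequently, the infimum ᾱ₀ of α_V over all 2-dimensional real normed spaces V satisfies 3/32 ≤ ᾱ₀ ≤ 1/8. -/
open scoped NNReal ENNReal
open MeasureTheory Filter

universe u v

namespace SharpIsop

/-- `γ` is an injective Lipschitz loop parametrizing the unit sphere `∂B_V`. -/
def SphereParam (V : Type u) [NormedAddCommGroup V] [NormedSpace ℝ V]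
    (γ : ℝ → V) : Prop :=
  IsLipLoop γ ∧ Set.InjOn γ (Set.Ico 0 1) ∧ γ '' Set.Icc 0 1 = Metric.sphere (0:V) 1

/-- The set of values `α_V = 1/(J(V)·length(∂B_V))` over all `2`-dimensional real
normed spaces `V` (with the unit sphere length computed from any injective Lipschitz
parametrization). -/
def alphaSet : Set ℝ :=
  {a | ∃ (V : Type) (nV : NormedAddCommGroup V),
    letI := nV
    ∃ sV : NormedSpace ℝ V,
      letI := sV
      Module.finrank ℝ V = 2 ∧ ∃ γ : ℝ → V, SphereParam V γ ∧
        a = 1 / (jungConstant V * loopLength γ)}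

/-!
Measured in an Auerbach basis, the length of a curve is at most the sum of the variations of its two
coordinates, and both coordinate functionals have norm `1`. Almost every line parallel to the kernel
of a functional of norm `1` meets the unit sphere at most twice, and does not meet it at all outside
a range of length `2`, so by Banach's indicatrix theorem each coordinate varies by at most `4` and
the sphere has length at most `8`. By Helly's theorem, `J(V) ≤ 2n / (n + 1) = 4 / 3` follows from
the case of `n + 1 = 3` points, whose average is within `4 / 3` of each of them.

For the sup norm, the four vertices of the unit square lie at mutual distance `2`, which forces the
length `8`, and `J = 1` is inherited from the two factors `ℝ`. A parametrization of the unit sphere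
of an arbitrary plane is the radial projection of the circle in `ℂ`. Its length is at least `4`,
because it passes through two antipodal points, so `J(V) · length(∂B_V)` is positive and the bound
on it can be inverted.
-/

section Variation

lemma sum_indicator_uIoo_le_encard_fiber {α : Type*} [ConditionallyCompleteLinearOrder α]
    [TopologicalSpace α] [OrderTopology α] [DenselyOrdered α] {f : α → ℝ} {s : Set α}
    [s.OrdConnected] (hf : ContinuousOn f s) {u : ℕ → α} (hu : Monotone u) (hus : ∀ i, u i ∈ s)
    (n : ℕ) (t : ℝ) :
    ∑ i ∈ Finset.range n, (Set.uIoo (f (u i)) (f (u (i + 1)))).indicator (1 : ℝ → ℝ≥0∞) t ≤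
      ((s ∩ f ⁻¹' {t}).encard : ℝ≥0∞) := by
  classical
  set crossings := {i ∈ Finset.range n | t ∈ Set.uIoo (f (u i)) (f (u (i + 1)))}
  have exists_fiber (i : ℕ) (hi : i ∈ (crossings : Set ℕ)) :
      ∃ x ∈ Set.Ioo (u i) (u (i + 1)), f x = t := by
    have hc : ContinuousOn f (Set.Icc (u i) (u (i + 1))) :=
      hf.mono (Set.Icc_subset s (hus i) (hus (i + 1)))
    have ht : t ∈ Set.uIoo (f (u i)) (f (u (i + 1))) := (Finset.mem_filter.1 hi).2
    rcases le_total (f (u i)) (f (u (i + 1))) with h | h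
    · exact intermediate_value_Ioo (hu i.le_succ) hc (Set.uIoo_of_le h ▸ ht)
    · exact intermediate_value_Ioo' (hu i.le_succ) hc (Set.uIoo_of_ge h ▸ ht)
  choose! x hx hfx using exists_fiber
  have hinj : Set.InjOn x crossings := fun i hi j hj hij => by
    by_contra hne
    exact Set.disjoint_left.1 (hu.pairwise_disjoint_on_Ioo_succ hne) (hx i hi) (hij ▸ hx j hj)
  have hmaps : Set.MapsTo x crossings (s ∩ f ⁻¹' {t}) := fun i hi =>
    ⟨Set.Icc_subset s (hus i) (hus (i + 1)) (Set.Ioo_subset_Icc_self (hx i hi)), hfx i hi⟩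
  have hcard : ((crossings.card : ℕ∞) : ℝ≥0∞) ≤ ((s ∩ f ⁻¹' {t}).encard : ℝ≥0∞) := by
    rw [← Set.encard_coe_eq_coe_finsetCard]
    exact ENat.toENNReal_mono (Set.encard_le_encard_of_injOn hmaps hinj)
  simpa [Set.indicator_apply, crossings, Finset.sum_boole] using hcard

/-- One half of **Banach's indicatrix theorem**. -/
theorem eVariationOn_le_lintegral_encard_fiber {α : Type*} [ConditionallyCompleteLinearOrder α]
    [TopologicalSpace α] [OrderTopology α] [DenselyOrdered α] {f : α → ℝ} {s : Set α}
    [s.OrdConnected] (hf : ContinuousOn f s) :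
    eVariationOn f s ≤ ∫⁻ t, ((s ∩ f ⁻¹' {t}).encard : ℝ≥0∞) := by
  refine iSup_le fun ⟨n, u, hu, hus⟩ => ?_
  calc ∑ i ∈ Finset.range n, edist (f (u (i + 1))) (f (u i))
      = ∑ i ∈ Finset.range n,
          ∫⁻ t, (Set.uIoo (f (u i)) (f (u (i + 1)))).indicator 1 t := by
        simp_rw [lintegral_indicator_one (s := Set.uIoo _ _) measurableSet_Ioo, Real.volume_uIoo,
          edist_dist, Real.dist_eq]
    _ = ∫⁻ t, ∑ i ∈ Finset.range n,
          (Set.uIoo (f (u i)) (f (u (i + 1)))).indicator 1 t :=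
        (lintegral_finsetSum _ fun i _ => measurable_one.indicator measurableSet_Ioo).symm
    _ ≤ ∫⁻ t, ((s ∩ f ⁻¹' {t}).encard : ℝ≥0∞) :=
        lintegral_mono fun t => sum_indicator_uIoo_le_encard_fiber hf hu hus n t

lemma eVariationOn_Icc_add_Icc {α E : Type*} [LinearOrder α] [PseudoEMetricSpace E] (f : α → E)
    {a b c : α} (hab : a ≤ b) (hbc : b ≤ c) :
    eVariationOn f (Set.Icc a b) + eVariationOn f (Set.Icc b c) =
      eVariationOn f (Set.Icc a c) := by
  simpa using eVariationOn.Icc_add_Icc f hab hbc (Set.mem_univ b)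

lemma edist_le_eVariationOn_Icc {α E : Type*} [LinearOrder α] [PseudoEMetricSpace E] (f : α → E)
    {a b : α} (hab : a ≤ b) : edist (f a) (f b) ≤ eVariationOn f (Set.Icc a b) :=
  eVariationOn.edist_le f (Set.left_mem_Icc.2 hab) (Set.right_mem_Icc.2 hab)

lemma card_mul_le_eVariationOn_add {α E : Type*} [LinearOrder α] [PseudoEMetricSpace E]
    {f : α → E} {δ : ℝ≥0∞} {a b : α} {S : Finset α} (hS : (S : Set α) ⊆ Set.Icc a b)
    (hsep : (S : Set α).Pairwise fun s t => δ ≤ edist (f s) (f t)) :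
    S.card * δ ≤ eVariationOn f (Set.Icc a b) + δ := by
  induction S using Finset.induction_on_max generalizing b with
  | empty => simp
  | insert x S hx ih =>
    rw [Finset.coe_insert, Set.insert_subset_iff] at hS
    rw [Finset.coe_insert] at hsep
    rcases S.eq_empty_or_nonempty with rfl | hne
    · simp
    have hm := S.max'_mem hne
    have hmx := hx _ hm
    have hδ : δ ≤ eVariationOn f (Set.Icc (S.max' hne) b) :=
      calc δ ≤ edist (f (S.max' hne)) (f x) :=
            hsep (Set.mem_insert_of_mem x hm) (Set.mem_insert x _) hmx.ne
        _ ≤ eVariationOn f (Set.Icc (S.max' hne) b) :=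
            eVariationOn.edist_le f (Set.left_mem_Icc.2 (hS.2 hm).2) ⟨hmx.le, hS.1.2⟩
    calc ((insert x S).card : ℝ≥0∞) * δ = S.card * δ + δ := by
          rw [Finset.card_insert_of_notMem fun h => (hx x h).false]; push_cast; ring
      _ ≤ (eVariationOn f (Set.Icc a (S.max' hne)) + δ) +
            eVariationOn f (Set.Icc (S.max' hne) b) :=
          add_le_add (ih (fun s hs => ⟨(hS.2 hs).1, S.le_max' s hs⟩)
            (hsep.mono (Set.subset_insert x _))) hδ
      _ = eVariationOn f (Set.Icc a b) + δ := by
          rw [← eVariationOn_Icc_add_Icc f (hS.2 hm).1 (hS.2 hm).2]; ring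

lemma card_mul_le_eVariationOn_of_closed {α E : Type*} [LinearOrder α] [PseudoEMetricSpace E]
    {f : α → E} {δ : ℝ≥0∞} {a b : α} (hclosed : f a = f b) {T : Finset E} (hT : T.Nontrivial)
    (hTf : (T : Set E) ⊆ f '' Set.Icc a b)
    (hsep : (T : Set E).Pairwise fun x y => δ ≤ edist x y) :
    T.card * δ ≤ eVariationOn f (Set.Icc a b) := by
  classical
  obtain ⟨S, hS, hinj, rfl⟩ := Finset.exists_subset_injOn_image_eq_of_surjOn _ _ hTf
  rw [Finset.coe_image, Set.InjOn.pairwise_image hinj] at hsep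
  have hS_nontrivial : S.Nontrivial := by
    rw [← Finset.one_lt_card_iff_nontrivial] at hT ⊢
    exact hT.trans_le Finset.card_image_le
  set p := S.min' hS_nontrivial.nonempty
  set q := S.max' hS_nontrivial.nonempty
  have hp : p ∈ S := S.min'_mem _
  have hq : q ∈ S := S.max'_mem _
  have hpq : p < q :=
    S.min'_lt_max'_of_card (Finset.one_lt_card_iff_nontrivial.2 hS_nontrivial)
  have hδ : δ ≤ eVariationOn f (Set.Icc a p) + eVariationOn f (Set.Icc q b) :=
    calc δ ≤ edist (f p) (f q) := hsep hp hq hpq.ne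
      _ ≤ edist (f p) (f a) + edist (f a) (f q) := edist_triangle _ _ _
      _ = edist (f a) (f p) + edist (f q) (f b) := by
          rw [edist_comm (f p), hclosed, edist_comm (f b) (f q)]
      _ ≤ eVariationOn f (Set.Icc a p) + eVariationOn f (Set.Icc q b) :=
          add_le_add (edist_le_eVariationOn_Icc f (hS hp).1) (edist_le_eVariationOn_Icc f (hS hq).2)
  rw [Finset.card_image_of_injOn hinj]
  calc S.card * δ ≤ eVariationOn f (Set.Icc p q) + δ :=
        card_mul_le_eVariationOn_add (fun s hs => ⟨S.min'_le s hs, S.le_max' s hs⟩) hsep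
    _ ≤ eVariationOn f (Set.Icc p q) +
          (eVariationOn f (Set.Icc a p) + eVariationOn f (Set.Icc q b)) := by gcongr
    _ = eVariationOn f (Set.Icc a b) := by
        rw [← eVariationOn_Icc_add_Icc f (hS hp).1 (hS hp).2,
          ← eVariationOn_Icc_add_Icc f hpq.le (hS hq).2]
        ring

lemma eVariationOn_le_sum_coord {α ι V : Type*} [LinearOrder α] [Fintype ι]
    [NormedAddCommGroup V] [NormedSpace ℝ V] (e : Module.Basis ι ℝ V) (f : α → V) (s : Set α) :
    eVariationOn f s ≤ ∑ i, ‖e i‖ₑ * eVariationOn (fun t => e.coord i (f t)) s := by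
  have hedist (v w : V) : edist v w ≤ ∑ i, ‖e i‖ₑ * edist (e.coord i v) (e.coord i w) := by
    calc edist v w = ‖∑ i, e.coord i (v - w) • e i‖ₑ := by
          rw [edist_eq_enorm_sub]; simp only [Module.Basis.coord_apply, e.sum_repr]
      _ ≤ ∑ i, ‖e.coord i (v - w) • e i‖ₑ := enorm_sum_le _ _
      _ = ∑ i, ‖e i‖ₑ * edist (e.coord i v) (e.coord i w) := by
          simp_rw [enorm_smul, map_sub, edist_eq_enorm_sub, mul_comm]
  refine iSup_le fun ⟨n, u, hu, hus⟩ => ?_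
  calc ∑ k ∈ Finset.range n, edist (f (u (k + 1))) (f (u k))
      ≤ ∑ k ∈ Finset.range n,
          ∑ i, ‖e i‖ₑ * edist (e.coord i (f (u (k + 1)))) (e.coord i (f (u k))) :=
        Finset.sum_le_sum fun k _ => hedist _ _
    _ = ∑ i, ‖e i‖ₑ *
          ∑ k ∈ Finset.range n, edist (e.coord i (f (u (k + 1)))) (e.coord i (f (u k))) := by
        rw [Finset.sum_comm]; simp_rw [Finset.mul_sum]
    _ ≤ ∑ i, ‖e i‖ₑ * eVariationOn (fun t => e.coord i (f t)) s := by
        gcongr with i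
        exact eVariationOn.sum_le hu hus

end Variation

section Fibres

lemma encard_levelSet_le_two {𝕜 : Type*} [Field 𝕜] [LinearOrder 𝕜] [IsStrictOrderedRing 𝕜]
    {f : 𝕜 → 𝕜} (hf : ConvexOn 𝕜 Set.univ f) {z c : 𝕜} (hz : f z < c) :
    {x | f x = c}.encard ≤ 2 := by
  have hmono : StrictMonoOn f {x | z < x ∧ f z < f x} := fun x hx y _ hxy =>
    hf.lt_right_of_left_lt (Set.mem_univ z) (Set.mem_univ y)
      (Ioo_subset_openSegment ⟨hx.1, hxy⟩) hx.2
  have hanti : StrictAntiOn f {x | x < z ∧ f z < f x} := fun y _ x hx hyx =>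
    hf.lt_left_of_right_lt (Set.mem_univ y) (Set.mem_univ z)
      (Ioo_subset_openSegment ⟨hyx, hx.1⟩) hx.2
  have hright : ({x | f x = c} ∩ Set.Ioi z).Subsingleton := fun x hx y hy =>
    hmono.injOn ⟨hx.2, hz.trans_eq hx.1.symm⟩ ⟨hy.2, hz.trans_eq hy.1.symm⟩ (hx.1.trans hy.1.symm)
  have hleft : ({x | f x = c} ∩ Set.Iio z).Subsingleton := fun x hx y hy =>
    hanti.injOn ⟨hx.2, hz.trans_eq hx.1.symm⟩ ⟨hy.2, hz.trans_eq hy.1.symm⟩ (hx.1.trans hy.1.symm)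
  calc {x | f x = c}.encard
      ≤ ({x | f x = c} ∩ Set.Iio z ∪ {x | f x = c} ∩ Set.Ioi z).encard :=
        Set.encard_le_encard fun x (hx : f x = c) =>
          (lt_or_gt_of_ne fun h : x = z => (h ▸ hx).not_lt hz).imp (⟨hx, ·⟩) (⟨hx, ·⟩)
    _ ≤ ({x | f x = c} ∩ Set.Iio z).encard + ({x | f x = c} ∩ Set.Ioi z).encard :=
        Set.encard_union_le _ _
    _ ≤ 1 + 1 :=
        add_le_add (Set.encard_le_one_iff_subsingleton.2 hleft)
          (Set.encard_le_one_iff_subsingleton.2 hright)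
    _ = 2 := one_add_one_eq_two

variable {V : Type*} [NormedAddCommGroup V] [NormedSpace ℝ V]

lemma convexOn_norm_add_smul (x y : V) : ConvexOn ℝ Set.univ fun c : ℝ => ‖x + c • y‖ := by
  have h := (convexOn_univ_norm (E := V)).comp_affineMap (AffineMap.lineMap x (x + y))
  simpa [Function.comp_def, AffineMap.lineMap_apply, add_comm] using h

lemma encard_sphere_inter_fiber_le_two (hV : Module.finrank ℝ V = 2) {a : Module.Dual ℝ V}
    (ha : a ≠ 0) {r : ℝ} {z : V} (hz : ‖z‖ < r) :
    (Metric.sphere 0 r ∩ a ⁻¹' {a z}).encard ≤ 2 := by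
  have : FiniteDimensional ℝ V := Module.finite_of_finrank_eq_succ hV
  have hker : Module.finrank ℝ (LinearMap.ker a) = 1 := by
    have := Module.Dual.finrank_ker_add_one_of_ne_zero ha
    lia
  obtain ⟨⟨y, _⟩, _, hy⟩ := finrank_eq_one_iff'.1 hker
  have hsub : Metric.sphere 0 r ∩ a ⁻¹' {a z} ⊆
      (fun c : ℝ => z + c • y) '' {c | ‖z + c • y‖ = r} := by
    rintro w ⟨hw, hwz⟩
    obtain ⟨c, hc⟩ := hy ⟨w - z, by simpa [sub_eq_zero] using hwz⟩
    have hzw : z + c • y = w := by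
      rw [show c • y = w - z from congrArg Subtype.val hc, add_sub_cancel]
    exact ⟨c, by simpa [hzw] using hw, hzw⟩
  calc (Metric.sphere 0 r ∩ a ⁻¹' {a z}).encard
      ≤ ((fun c : ℝ => z + c • y) '' {c | ‖z + c • y‖ = r}).encard := Set.encard_le_encard hsub
    _ ≤ {c : ℝ | ‖z + c • y‖ = r}.encard := Set.encard_image_le _ _
    _ ≤ 2 := encard_levelSet_le_two (convexOn_norm_add_smul z y) (z := 0) (by simpa using hz)

lemma exists_norm_lt_one_and_apply_eq {a : V →L[ℝ] ℝ} {t : ℝ} (ht : |t| < ‖a‖) :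
    ∃ z, ‖z‖ < 1 ∧ a z = t := by
  obtain ⟨x, hx, htx⟩ := a.exists_lt_apply_of_lt_opNorm ht
  have hax : a x ≠ 0 := norm_pos_iff.1 ((abs_nonneg t).trans_lt htx)
  refine ⟨(t / a x) • x, ?_, by simp [hax]⟩
  calc ‖(t / a x) • x‖ ≤ 1 * ‖x‖ := by
        rw [norm_smul, norm_div]
        gcongr
        exact (div_le_one (norm_pos_iff.2 hax)).2 htx.le
    _ < 1 := by rwa [one_mul]

lemma encard_unitSphere_inter_fiber_le_two (hV : Module.finrank ℝ V = 2) {a : V →L[ℝ] ℝ} {t : ℝ}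
    (ht : |t| < ‖a‖) : (Metric.sphere 0 1 ∩ a ⁻¹' {t}).encard ≤ 2 := by
  obtain ⟨z, hz, rfl⟩ := exists_norm_lt_one_and_apply_eq ht
  have ha : (a : Module.Dual ℝ V) ≠ 0 := fun h =>
    norm_pos_iff.1 ((abs_nonneg _).trans_lt ht) (ContinuousLinearMap.coe_injective h)
  exact encard_sphere_inter_fiber_le_two hV ha hz

lemma unitSphere_inter_fiber_eq_empty {a : V →L[ℝ] ℝ} {t : ℝ} (ht : ‖a‖ < |t|) :
    Metric.sphere 0 1 ∩ a ⁻¹' {t} = ∅ := by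
  rw [Set.eq_empty_iff_forall_notMem]
  rintro w ⟨hw, rfl⟩
  exact ht.not_ge (a.unit_le_opNorm w (mem_sphere_zero_iff_norm.1 hw).le)

lemma encard_arc_inter_fiber_le {V : Type*} {γ : ℝ → V} {S : Set V} {u v t : ℝ} {a : V → ℝ}
    (hinj : Set.InjOn γ (Set.Ioo u v)) (hmaps : Set.MapsTo γ (Set.Icc u v) S)
    (hu : a (γ u) ≠ t) (hv : a (γ v) ≠ t) :
    (Set.Icc u v ∩ (fun s => a (γ s)) ⁻¹' {t}).encard ≤ (S ∩ a ⁻¹' {t}).encard := by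
  have hIoo : ∀ s ∈ Set.Icc u v ∩ (fun s => a (γ s)) ⁻¹' {t}, s ∈ Set.Ioo u v := by
    rintro s ⟨⟨hus, hsv⟩, hst⟩
    exact ⟨hus.lt_of_ne (by rintro rfl; exact hu hst), hsv.lt_of_ne (by rintro rfl; exact hv hst)⟩
  exact Set.encard_le_encard_of_injOn (fun s hs => ⟨hmaps hs.1, hs.2⟩) (hinj.mono hIoo)

theorem eVariationOn_comp_le_four_mul_enorm (hV : Module.finrank ℝ V = 2) {γ : ℝ → V} {u v : ℝ}
    (hγ : ContinuousOn γ (Set.Icc u v)) (hinj : Set.InjOn γ (Set.Ioo u v))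
    (hmaps : Set.MapsTo γ (Set.Icc u v) (Metric.sphere 0 1)) (a : V →L[ℝ] ℝ) :
    eVariationOn (fun s => a (γ s)) (Set.Icc u v) ≤ 4 * ‖a‖ₑ := by
  have hgeneric : ∀ᵐ t : ℝ, t ∉ ({a (γ u), a (γ v), ‖a‖, -‖a‖} : Set ℝ) :=
    compl_mem_ae_iff.2 (Set.Finite.measure_zero (by simp) _)
  have hfiber : ∀ᵐ t : ℝ, ((Set.Icc u v ∩ (fun s => a (γ s)) ⁻¹' {t}).encard : ℝ≥0∞) ≤
      (Set.Icc (-‖a‖) ‖a‖).indicator (fun _ => 2) t := by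
    filter_upwards [hgeneric] with t ht
    simp only [Set.mem_insert_iff, Set.mem_singleton_iff, not_or] at ht
    obtain ⟨htu, htv, ht_ne, ht_ne_neg⟩ := ht
    have harc := encard_arc_inter_fiber_le hinj hmaps (Ne.symm htu) (Ne.symm htv)
    rcases lt_or_gt_of_ne fun h : |t| = ‖a‖ => (eq_or_eq_neg_of_abs_eq h).elim ht_ne ht_ne_neg
      with hta | hta
    · rw [Set.indicator_of_mem (Set.mem_Icc.2 (abs_le.1 hta.le))]
      exact ENat.toENNReal_mono (harc.trans (encard_unitSphere_inter_fiber_le_two hV hta))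
    · rw [unitSphere_inter_fiber_eq_empty hta, Set.encard_empty, nonpos_iff_eq_zero] at harc
      simp [harc]
  calc eVariationOn (fun s => a (γ s)) (Set.Icc u v)
      ≤ ∫⁻ t, ((Set.Icc u v ∩ (fun s => a (γ s)) ⁻¹' {t}).encard : ℝ≥0∞) :=
        eVariationOn_le_lintegral_encard_fiber (a.continuous.comp_continuousOn hγ)
    _ ≤ ∫⁻ t, (Set.Icc (-‖a‖) ‖a‖).indicator (fun _ => 2) t := lintegral_mono_ae hfiber
    _ = 4 * ‖a‖ₑ := by
        rw [lintegral_indicator_const measurableSet_Icc, Real.volume_Icc, sub_neg_eq_add,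
          ENNReal.ofReal_add (norm_nonneg a) (norm_nonneg a), ofReal_norm]
        ring

end Fibres

section Girth

variable {V : Type*} [NormedAddCommGroup V] [NormedSpace ℝ V]

lemma continuous_basis_det {ι : Type*} [Fintype ι] [DecidableEq ι] (b : Module.Basis ι ℝ V) :
    Continuous fun w : ι → V => b.det w := by
  have := b.finiteDimensional_of_finite
  refine Continuous.matrix_det (continuous_matrix fun i j => ?_)
  exact (b.coord i).continuous_of_finiteDimensional.comp (continuous_apply j)

lemma exists_isMaxOn_abs_det {ι : Type*} [Fintype ι] [DecidableEq ι] (b : Module.Basis ι ℝ V) :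
    ∃ w : ι → V, (∀ i, ‖w i‖ ≤ 1) ∧ b.det w ≠ 0 ∧
      ∀ w' : ι → V, (∀ i, ‖w' i‖ ≤ 1) → |b.det w'| ≤ |b.det w| := by
  have := b.finiteDimensional_of_finite
  have := FiniteDimensional.proper_real V
  obtain ⟨w, hw, hmax⟩ :=
    (isCompact_univ_pi fun _ : ι => isCompact_closedBall (0 : V) 1).exists_isMaxOn ⟨0, by simp⟩
      (continuous_basis_det b).abs.continuousOn
  have hmax' (w' : ι → V) (hw' : ∀ i, ‖w' i‖ ≤ 1) : |b.det w'| ≤ |b.det w| :=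
    hmax fun i _ => mem_closedBall_zero_iff.2 (hw' i)
  let c := b.isUnitSMul fun i => (inv_ne_zero (norm_ne_zero_iff.2 (b.ne_zero i))).isUnit
  have hc (i : ι) : ‖c i‖ ≤ 1 := by
    simp [c, Module.Basis.isUnitSMul_apply, norm_smul, b.ne_zero i]
  refine ⟨w, fun i => mem_closedBall_zero_iff.1 (hw i trivial), ?_, hmax'⟩
  exact abs_pos.1 ((abs_pos.2 (b.isUnit_det c).ne_zero).trans_le (hmax' c hc))

/-- The basis maximises the determinant among families in the unit ball, so that replacing one of
its vectors by `v` multiplies the determinant by at most `‖v‖`. -/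
theorem exists_auerbach_basis [FiniteDimensional ℝ V] :
    ∃ e : Module.Basis (Fin (Module.finrank ℝ V)) ℝ V,
      (∀ i, ‖e i‖ = 1) ∧ ∀ i v, ‖e.coord i v‖ ≤ ‖v‖ := by
  let b := Module.finBasis ℝ V
  obtain ⟨w, hw, hdet, hmax⟩ := exists_isMaxOn_abs_det b
  obtain ⟨hli, hsp⟩ := (Module.Basis.is_basis_iff_det b).2 hdet.isUnit
  set e := Module.Basis.mk hli hsp.ge
  have he : ⇑e = w := Module.Basis.coe_mk _ _
  have hunit (i) (v : V) (hv : v ∈ Metric.sphere 0 1) : ‖e.coord i v‖ ≤ 1 := by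
    have hupdate : |b.det (Function.update w i v)| ≤ |b.det w| := hmax _ fun j => by
      rcases eq_or_ne j i with rfl | hji
      · simpa using (mem_sphere_zero_iff_norm.1 hv).le
      · simpa [hji] using hw j
    have hdet_update : b.det w * e.coord i v = b.det (Function.update w i v) :=
      LinearMap.congr_fun (b.det_smul_mk_coord_eq_det_update hli hsp.ge i) v
    rw [← hdet_update, abs_mul] at hupdate
    exact (mul_le_iff_le_one_right (abs_pos.2 hdet)).1 hupdate
  have hcoord (i) (v : V) : ‖e.coord i v‖ ≤ ‖v‖ := by
    simpa using (e.coord i).bound_of_sphere_bound one_pos 1 (hunit i) v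
  refine ⟨e, fun i => le_antisymm (he ▸ hw i) ?_, hcoord⟩
  simpa using hcoord i (e i)

theorem eVariationOn_sphere_arc_le_eight (hV : Module.finrank ℝ V = 2) {γ : ℝ → V} {u v : ℝ}
    (hγ : ContinuousOn γ (Set.Icc u v)) (hinj : Set.InjOn γ (Set.Ioo u v))
    (hmaps : Set.MapsTo γ (Set.Icc u v) (Metric.sphere 0 1)) :
    eVariationOn γ (Set.Icc u v) ≤ 8 := by
  have : FiniteDimensional ℝ V := Module.finite_of_finrank_eq_succ hV
  obtain ⟨e, he, hcoord⟩ := exists_auerbach_basis (V := V)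
  have hvar (i) : eVariationOn (fun t => e.coord i (γ t)) (Set.Icc u v) ≤ 4 := by
    let a : V →L[ℝ] ℝ := (e.coord i).toContinuousLinearMap
    have ha : ‖a‖ₑ ≤ 1 := by
      rw [← ofReal_norm, ENNReal.ofReal_le_one]
      exact a.opNorm_le_bound zero_le_one fun w => by rw [one_mul]; exact hcoord i w
    calc eVariationOn (fun t => a (γ t)) (Set.Icc u v) ≤ 4 * ‖a‖ₑ :=
          eVariationOn_comp_le_four_mul_enorm hV hγ hinj hmaps a
      _ ≤ 4 * 1 := by gcongr
      _ = 4 := mul_one 4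
  calc eVariationOn γ (Set.Icc u v)
      ≤ ∑ i, ‖e i‖ₑ * eVariationOn (fun t => e.coord i (γ t)) (Set.Icc u v) :=
        eVariationOn_le_sum_coord e γ _
    _ ≤ ∑ _i : Fin (Module.finrank ℝ V), 1 * 4 := by
        gcongr with i
        · rw [← ofReal_norm, he i, ENNReal.ofReal_one]
        · exact hvar i
    _ = 8 := by rw [Finset.sum_const, Finset.card_univ, Fintype.card_fin, hV]; norm_num

end Girth

section JungConstant

/-- `r` is admissible in the infimum that defines `jungConstant V`. -/
def IsJungRadius (V : Type*) [PseudoMetricSpace V] (r : ℝ) : Prop :=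
  0 ≤ r ∧ ∀ A : Set V, Metric.ediam A ≤ 2 → ∃ c : V, A ⊆ Metric.closedBall c r

lemma dist_le_two_of_ediam_le {X : Type*} [PseudoMetricSpace X] {A : Set X}
    (hA : Metric.ediam A ≤ 2) {x y : X} (hx : x ∈ A) (hy : y ∈ A) : dist x y ≤ 2 := by
  rw [dist_edist]
  exact ENNReal.toReal_le_of_le_ofReal zero_le_two
    ((Metric.edist_le_ediam_of_mem hx hy).trans (by simpa using hA))

lemma isJungRadius_two (V : Type*) [PseudoMetricSpace V] [Nonempty V] : IsJungRadius V 2 := by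
  refine ⟨zero_le_two, fun A hA => ?_⟩
  rcases A.eq_empty_or_nonempty with rfl | ⟨c, hc⟩
  · exact ⟨Classical.arbitrary V, Set.empty_subset _⟩
  · exact ⟨c, fun x hx => dist_le_two_of_ediam_le hA hx hc⟩

lemma IsJungRadius.jungConstant_le {V : Type*} [PseudoMetricSpace V] {r : ℝ}
    (hr : IsJungRadius V r) : jungConstant V ≤ r :=
  csInf_le ⟨0, fun _ hs => hs.1⟩ hr

lemma IsJungRadius.prod {V W : Type*} [PseudoMetricSpace V] [PseudoMetricSpace W] {r : ℝ}
    (hV : IsJungRadius V r) (hW : IsJungRadius W r) : IsJungRadius (V × W) r := by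
  refine ⟨hV.1, fun A hA => ?_⟩
  obtain ⟨c, hc⟩ := hV.2 (Prod.fst '' A) <|
    (LipschitzWith.prod_fst.ediam_image_le A).trans (by simpa using hA)
  obtain ⟨d, hd⟩ := hW.2 (Prod.snd '' A) <|
    (LipschitzWith.prod_snd.ediam_image_le A).trans (by simpa using hA)
  refine ⟨(c, d), fun p hp => ?_⟩
  rw [← closedBall_prod_same]
  exact ⟨hc (Set.mem_image_of_mem _ hp), hd (Set.mem_image_of_mem _ hp)⟩

variable {V : Type*} [NormedAddCommGroup V] [NormedSpace ℝ V]

lemma dist_self_neg (x : V) : dist x (-x) = 2 * ‖x‖ := by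
  rw [dist_eq_norm, sub_neg_eq_add, ← two_smul ℝ x, norm_smul, Real.norm_two]

lemma IsJungRadius.one_le [Nontrivial V] {r : ℝ} (hr : IsJungRadius V r) : 1 ≤ r := by
  obtain ⟨x, hx⟩ := exists_norm_eq V zero_le_one
  have hdist : dist x (-x) = 2 := by rw [dist_self_neg, hx, mul_one]
  obtain ⟨c, hc⟩ := hr.2 {x, -x} (by simp [Metric.ediam_pair, edist_dist, hdist])
  have hxc : dist x c ≤ r := hc (by simp)
  have hxc' : dist (-x) c ≤ r := hc (by simp)
  linarith [dist_triangle_right x (-x) c]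

lemma one_le_jungConstant (V : Type*) [NormedAddCommGroup V] [NormedSpace ℝ V] [Nontrivial V] :
    1 ≤ jungConstant V :=
  le_csInf ⟨2, isJungRadius_two V⟩ fun _ hr => IsJungRadius.one_le hr

lemma dist_average_le {ι : Type*} {s : Finset ι} {x : ι → V} {d : ℝ}
    (hd : ∀ i ∈ s, ∀ j ∈ s, dist (x i) (x j) ≤ d) {i : ι} (hi : i ∈ s) :
    dist (x i) ((s.card : ℝ)⁻¹ • ∑ j ∈ s, x j) ≤ (1 - (s.card : ℝ)⁻¹) * d := by
  classical
  have hcard : (s.card : ℝ) ≠ 0 := Nat.cast_ne_zero.2 (Finset.card_ne_zero_of_mem hi)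
  calc dist (x i) ((s.card : ℝ)⁻¹ • ∑ j ∈ s, x j)
      = ‖(s.card : ℝ)⁻¹ • ∑ j ∈ s, (x i - x j)‖ := by
        rw [Finset.sum_sub_distrib, Finset.sum_const, smul_sub, ← Nat.cast_smul_eq_nsmul ℝ,
          inv_smul_smul₀ hcard, dist_eq_norm]
    _ = (s.card : ℝ)⁻¹ * ‖∑ j ∈ s.erase i, (x i - x j)‖ := by
        rw [norm_smul, norm_inv, RCLike.norm_natCast, Finset.sum_erase]
        exact sub_self (x i)
    _ ≤ (s.card : ℝ)⁻¹ * ((s.card - 1) * d) := by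
        gcongr
        refine (norm_sum_le_of_le _ fun j hj => ?_).trans_eq (b := ∑ _j ∈ s.erase i, d) ?_
        · rw [← dist_eq_norm]
          exact hd i hi j (Finset.mem_of_mem_erase hj)
        · rw [Finset.sum_const, Finset.card_erase_of_mem hi, nsmul_eq_mul,
            Nat.cast_pred (Finset.card_pos.2 ⟨i, hi⟩)]
    _ = (1 - (s.card : ℝ)⁻¹) * d := by field_simp

/-- By **Helly's theorem** it is enough to consider at most `n + 1` points, where the average
does the job. -/
theorem exists_subset_closedBall_of_dist_le [FiniteDimensional ℝ V] {A : Set V} {d : ℝ}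
    (hA : ∀ x ∈ A, ∀ y ∈ A, dist x y ≤ d) :
    ∃ c, A ⊆ Metric.closedBall c (Module.finrank ℝ V / (Module.finrank ℝ V + 1) * d) := by
  set n := Module.finrank ℝ V
  have := FiniteDimensional.proper_real V
  have hinter (I : Finset A) (hI : I.card ≤ n + 1) :
      (⋂ x ∈ I, Metric.closedBall (x : V) (n / (n + 1) * d)).Nonempty := by
    refine ⟨(I.card : ℝ)⁻¹ • ∑ x ∈ I, (x : V), Set.mem_iInter₂.2 fun x hx => ?_⟩
    have hd : 0 ≤ d := dist_nonneg.trans (hA x x.2 x x.2)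
    have hI_pos : (0 : ℝ) < I.card := Nat.cast_pos.2 (Finset.card_pos.2 ⟨x, hx⟩)
    have hI_le : (I.card : ℝ) ≤ n + 1 := mod_cast hI
    rw [Metric.mem_closedBall']
    calc dist (x : V) ((I.card : ℝ)⁻¹ • ∑ x ∈ I, (x : V)) ≤ (1 - (I.card : ℝ)⁻¹) * d :=
          dist_average_le (x := ((↑) : A → V)) (fun y _ z _ => hA y y.2 z z.2) hx
      _ ≤ (1 - (n + 1 : ℝ)⁻¹) * d := by gcongr
      _ = n / (n + 1) * d := by field_simp; ring
  obtain ⟨c, hc⟩ := Convex.helly_theorem_compact' (𝕜 := ℝ)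
    (F := fun x : A => Metric.closedBall (x : V) (n / (n + 1) * d))
    (fun x => convex_closedBall _ _) (fun x => isCompact_closedBall _ _) hinter
  exact ⟨c, fun x hx => Metric.mem_closedBall'.2 (Set.mem_iInter.1 hc ⟨x, hx⟩)⟩

/-- **Bohnenblust's inequality** -/
theorem isJungRadius_of_finiteDimensional (V : Type*) [NormedAddCommGroup V] [NormedSpace ℝ V]
    [FiniteDimensional ℝ V] :
    IsJungRadius V (Module.finrank ℝ V / (Module.finrank ℝ V + 1) * 2) :=
  ⟨by positivity, fun _ hA =>
    exists_subset_closedBall_of_dist_le fun _ hx _ hy => dist_le_two_of_ediam_le hA hx hy⟩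

theorem jungConstant_prod_real : jungConstant (ℝ × ℝ) = 1 := by
  have hℝ : IsJungRadius ℝ 1 := by
    simpa [one_add_one_eq_two] using isJungRadius_of_finiteDimensional ℝ
  exact le_antisymm (hℝ.prod hℝ).jungConstant_le (one_le_jungConstant _)

lemma jungConstant_le_of_finrank_eq_two (hV : Module.finrank ℝ V = 2) :
    jungConstant V ≤ 4 / 3 := by
  have : FiniteDimensional ℝ V := Module.finite_of_finrank_eq_succ hV
  calc jungConstant V ≤ Module.finrank ℝ V / (Module.finrank ℝ V + 1) * 2 :=
        (isJungRadius_of_finiteDimensional V).jungConstant_le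
    _ = 4 / 3 := by rw [hV]; norm_num

end JungConstant

section SphereParam

variable {V W : Type*} [NormedAddCommGroup V] [NormedSpace ℝ V] [NormedAddCommGroup W]
  [NormedSpace ℝ W]

lemma SphereParam.continuousOn {γ : ℝ → V} (hγ : SphereParam V γ) :
    ContinuousOn γ (Set.Icc 0 1) := by
  obtain ⟨K, hK⟩ := hγ.1.1
  exact hK.continuousOn

lemma SphereParam.injOn_Ioo {γ : ℝ → V} (hγ : SphereParam V γ) : Set.InjOn γ (Set.Ioo 0 1) :=
  hγ.2.1.mono Set.Ioo_subset_Ico_self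

lemma SphereParam.mapsTo {γ : ℝ → V} (hγ : SphereParam V γ) :
    Set.MapsTo γ (Set.Icc 0 1) (Metric.sphere 0 1) :=
  Set.mapsTo_iff_image_subset.2 hγ.2.2.subset

lemma norm_normalize_sub_normalize_le {x : V} (hx : x ≠ 0) (y : V) :
    ‖NormedSpace.normalize x - NormedSpace.normalize y‖ ≤ 2 * ‖x‖⁻¹ * ‖x - y‖ := by
  have hx_pos : 0 < ‖x‖ := norm_pos_iff.2 hx
  have hdecomp : NormedSpace.normalize x - NormedSpace.normalize y =
      ‖x‖⁻¹ • ((x - y) + (‖y‖ - ‖x‖) • NormedSpace.normalize y) := by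
    rw [sub_smul, NormedSpace.norm_smul_normalize, sub_add_sub_cancel, smul_sub,
      inv_smul_smul₀ hx_pos.ne', NormedSpace.normalize]
  have hy : ‖NormedSpace.normalize y‖ ≤ 1 := by
    rw [NormedSpace.normalize, norm_smul, norm_inv, norm_norm]
    exact inv_mul_le_one
  calc ‖NormedSpace.normalize x - NormedSpace.normalize y‖
      = ‖x‖⁻¹ * ‖(x - y) + (‖y‖ - ‖x‖) • NormedSpace.normalize y‖ := by
        rw [hdecomp, norm_smul, norm_inv, norm_norm]
    _ ≤ ‖x‖⁻¹ * (‖x - y‖ + ‖x - y‖ * 1) := by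
        gcongr
        refine (norm_add_le _ _).trans ?_
        rw [norm_smul]
        gcongr
        rw [norm_sub_rev x y]
        exact abs_norm_sub_norm_le y x
    _ = 2 * ‖x‖⁻¹ * ‖x - y‖ := by ring

lemma leftInvOn_normalize_comp_sphere (L : V ≃ₗ[ℝ] W) :
    Set.LeftInvOn (fun y => NormedSpace.normalize (L.symm y))
      (fun x => NormedSpace.normalize (L x)) (Metric.sphere 0 1) := fun x hx => by
  have hx' : ‖x‖ = 1 := mem_sphere_zero_iff_norm.1 hx
  have hLx : L x ≠ 0 := L.map_ne_zero_iff.2 (norm_ne_zero_iff.1 (hx'.trans_ne one_ne_zero))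
  calc NormedSpace.normalize (L.symm (‖L x‖⁻¹ • L x)) = NormedSpace.normalize (‖L x‖⁻¹ • x) := by
        rw [map_smul, L.symm_apply_apply]
    _ = NormedSpace.normalize x :=
        NormedSpace.normalize_smul_of_pos (inv_pos.2 (norm_pos_iff.2 hLx)) x
    _ = x := NormedSpace.normalize_eq_self_of_norm_eq_one hx'

lemma mapsTo_normalize_comp_sphere (L : V ≃ₗ[ℝ] W) :
    Set.MapsTo (fun x => NormedSpace.normalize (L x)) (Metric.sphere 0 1) (Metric.sphere 0 1) :=
  fun x hx => by
    have hx' : x ≠ 0 := ne_zero_of_mem_unit_sphere ⟨x, hx⟩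
    exact mem_sphere_zero_iff_norm.2 (NormedSpace.norm_normalize (L.map_ne_zero_iff.2 hx'))

lemma bijOn_normalize_comp_sphere (L : V ≃ₗ[ℝ] W) :
    Set.BijOn (fun x => NormedSpace.normalize (L x)) (Metric.sphere 0 1) (Metric.sphere 0 1) :=
  Set.InvOn.bijOn ⟨leftInvOn_normalize_comp_sphere L, leftInvOn_normalize_comp_sphere L.symm⟩
    (mapsTo_normalize_comp_sphere L) (mapsTo_normalize_comp_sphere L.symm)

lemma lipschitzOnWith_normalize_comp_sphere (L : V ≃L[ℝ] W) :
    LipschitzOnWith (2 * ‖(L.symm : W →L[ℝ] V)‖₊ * ‖(L : V →L[ℝ] W)‖₊)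
      (fun x => NormedSpace.normalize (L x)) (Metric.sphere 0 1) := by
  refine LipschitzOnWith.of_dist_le_mul fun x hx y _ => ?_
  have hx' : ‖x‖ = 1 := mem_sphere_zero_iff_norm.1 hx
  have hLx : 0 < ‖L x‖ :=
    norm_pos_iff.2 (L.map_ne_zero_iff.2 (norm_ne_zero_iff.1 (hx'.trans_ne one_ne_zero)))
  have hLx_inv : ‖L x‖⁻¹ ≤ ‖(L.symm : W →L[ℝ] V)‖ := by
    rw [inv_le_iff_one_le_mul₀ hLx]
    simpa [hx'] using (L.symm : W →L[ℝ] V).le_opNorm (L x)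
  rw [dist_eq_norm, dist_eq_norm]
  calc ‖NormedSpace.normalize (L x) - NormedSpace.normalize (L y)‖
      ≤ 2 * ‖L x‖⁻¹ * ‖L x - L y‖ := norm_normalize_sub_normalize_le (norm_pos_iff.1 hLx) _
    _ ≤ 2 * ‖(L.symm : W →L[ℝ] V)‖ * (‖(L : V →L[ℝ] W)‖ * ‖x - y‖) := by
        gcongr
        rw [← map_sub]
        exact (L : V →L[ℝ] W).le_opNorm (x - y)
    _ = _ := by push_cast; ring

theorem SphereParam.normalize_comp {γ : ℝ → V} (hγ : SphereParam V γ) (L : V ≃L[ℝ] W) :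
    SphereParam W fun t => NormedSpace.normalize (L (γ t)) := by
  have hmaps := hγ.mapsTo
  obtain ⟨⟨⟨K, hK⟩, hclosed⟩, hinj, himage⟩ := hγ
  have hbij := bijOn_normalize_comp_sphere L.toLinearEquiv
  refine ⟨⟨⟨_, (lipschitzOnWith_normalize_comp_sphere L).comp hK hmaps⟩,
      congrArg (fun x => NormedSpace.normalize (L x)) hclosed⟩,
    hbij.injOn.comp hinj (hmaps.mono_left Set.Ico_subset_Icc_self), ?_⟩
  rw [← hbij.image_eq, ← himage, Set.image_image]
  rfl

lemma lipschitzWith_circleExp : LipschitzWith 1 fun t : ℝ => (Circle.exp t : ℂ) := by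
  refine LipschitzWith.of_dist_le_mul fun s t => ?_
  calc dist (Circle.exp s : ℂ) (Circle.exp t)
      = ‖(Circle.exp t : ℂ) * (Complex.exp (Complex.I * (s - t : ℝ)) - 1)‖ := by
        rw [mul_sub_one, Circle.coe_exp, Circle.coe_exp, ← Complex.exp_add, dist_eq_norm]
        push_cast
        ring_nf
    _ ≤ 1 * ‖s - t‖ := by
        rw [norm_mul, Circle.norm_coe]
        gcongr
        exact Real.norm_exp_I_mul_ofReal_sub_one_le
    _ = ((1 : ℝ≥0) : ℝ) * dist s t := by rw [dist_eq_norm, NNReal.coe_one]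

lemma sphereParam_complex : SphereParam ℂ fun t => (Circle.exp (2 * Real.pi * t) : ℂ) := by
  have hlip := lipschitzWith_circleExp.comp (lipschitzWith_smul (β := ℝ) (2 * Real.pi))
  have hpi : 2 * Real.pi ≠ 0 := Real.two_pi_pos.ne'
  refine ⟨⟨⟨_, hlip.lipschitzOnWith⟩, by simp⟩, fun s hs t ht hst => ?_, ?_⟩
  · have hmem {r : ℝ} (hr : r ∈ Set.Ico (0 : ℝ) 1) : 2 * Real.pi * r ∈ Set.Ico 0 (2 * Real.pi) :=
      ⟨by have := hr.1; positivity, mul_lt_of_lt_one_right Real.two_pi_pos hr.2⟩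
    exact mul_left_cancel₀ hpi
      (Circle.exp_injOn_Ico (by rw [sub_zero]) (hmem hs) (hmem ht) (Subtype.ext hst))
  · refine Set.Subset.antisymm (Set.image_subset_iff.2 fun t _ => (Circle.exp _).2) fun z hz => ?_
    obtain ⟨s, hs⟩ := Circle.exp_surjective ⟨z, hz⟩
    obtain ⟨t, ht, hst⟩ := Circle.periodic_exp.exists_mem_Ico₀ Real.two_pi_pos s
    refine ⟨t / (2 * Real.pi), ⟨by have := ht.1; positivity,
      div_le_one_of_le₀ ht.2.le Real.two_pi_pos.le⟩, ?_⟩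
    dsimp only
    rw [mul_div_cancel₀ _ hpi, ← hst, hs]

theorem exists_sphereParam (hV : Module.finrank ℝ V = 2) : ∃ γ, SphereParam V γ :=
  have : FiniteDimensional ℝ V := Module.finite_of_finrank_eq_succ hV
  ⟨_, sphereParam_complex.normalize_comp
    (ContinuousLinearEquiv.ofFinrankEq (Complex.finrank_real_complex.trans hV.symm))⟩

end SphereParam

section Bounds

lemma eight_le_eVariationOn_of_unitSquare_subset {α : Type*} [LinearOrder α] {γ : α → ℝ × ℝ}
    {u v : α} (hclosed : γ u = γ v) (hsurj : Metric.sphere 0 1 ⊆ γ '' Set.Icc u v) :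
    8 ≤ eVariationOn γ (Set.Icc u v) := by
  let vertices : Finset (ℝ × ℝ) := {1, -1} ×ˢ {1, -1}
  have hcard : vertices.card = 4 := by
    rw [Finset.card_product, Finset.card_pair (by norm_num)]
  have hsphere : (vertices : Set (ℝ × ℝ)) ⊆ Metric.sphere 0 1 := by
    rintro ⟨x, y⟩ hxy
    obtain ⟨rfl | rfl, rfl | rfl⟩ := by simpa [vertices] using hxy
    all_goals simp [Prod.norm_def]
  have hsep : (vertices : Set (ℝ × ℝ)).Pairwise fun p q => 2 ≤ edist p q := by
    rintro ⟨x, y⟩ hxy ⟨x', y'⟩ hxy' hne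
    rw [edist_dist, ENNReal.ofNat_le_ofReal]
    obtain ⟨rfl | rfl, rfl | rfl⟩ := by simpa [vertices] using hxy
    all_goals
      obtain ⟨rfl | rfl, rfl | rfl⟩ := by simpa [vertices] using hxy'
      all_goals first | exact absurd rfl hne | norm_num [Prod.dist_eq, Real.dist_eq]
  calc (8 : ℝ≥0∞) = vertices.card * 2 := by rw [hcard]; norm_num
    _ ≤ eVariationOn γ (Set.Icc u v) :=
        card_mul_le_eVariationOn_of_closed hclosed
          (Finset.one_lt_card_iff_nontrivial.1 (by rw [hcard]; norm_num))
          (hsphere.trans hsurj) hsep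

variable {V : Type*} [NormedAddCommGroup V] [NormedSpace ℝ V]

lemma loopLength_le_eight (hV : Module.finrank ℝ V = 2) {γ : ℝ → V}
    (hγ : ContinuousOn γ (Set.Icc 0 1)) (hinj : Set.InjOn γ (Set.Ioo 0 1))
    (hmaps : Set.MapsTo γ (Set.Icc 0 1) (Metric.sphere 0 1)) : loopLength γ ≤ 8 :=
  ENNReal.toReal_le_of_le_ofReal (by norm_num)
    (by simpa using eVariationOn_sphere_arc_le_eight hV hγ hinj hmaps)

lemma jungConstant_mul_loopLength_le (hV : Module.finrank ℝ V = 2) {γ : ℝ → V}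
    (hγ : ContinuousOn γ (Set.Icc 0 1)) (hinj : Set.InjOn γ (Set.Ioo 0 1))
    (hmaps : Set.MapsTo γ (Set.Icc 0 1) (Metric.sphere 0 1)) :
    jungConstant V * loopLength γ ≤ 32 / 3 :=
  calc jungConstant V * loopLength γ ≤ 4 / 3 * 8 :=
        mul_le_mul (jungConstant_le_of_finrank_eq_two hV) (loopLength_le_eight hV hγ hinj hmaps)
          ENNReal.toReal_nonneg (by norm_num)
    _ = 32 / 3 := by norm_num

lemma loopLength_unitSquare {γ : ℝ → ℝ × ℝ} (hγ : ContinuousOn γ (Set.Icc 0 1))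
    (hclosed : γ 0 = γ 1) (hinj : Set.InjOn γ (Set.Ioo 0 1))
    (himage : γ '' Set.Icc 0 1 = Metric.sphere 0 1) : loopLength γ = 8 := by
  have hle := eVariationOn_sphere_arc_le_eight (by simp) hγ hinj
    (Set.mapsTo_iff_image_subset.2 himage.subset)
  have hge := eight_le_eVariationOn_of_unitSquare_subset hclosed himage.superset
  rw [loopLength, hle.antisymm hge]
  rfl

lemma SphereParam.four_le_loopLength [Nontrivial V] {γ : ℝ → V} (hγ : SphereParam V γ) :
    4 ≤ loopLength γ := by
  classical
  obtain ⟨x, hx⟩ := exists_norm_eq V zero_le_one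
  obtain ⟨⟨⟨K, hK⟩, hclosed⟩, -, himage⟩ := hγ
  have hdist : dist x (-x) = 2 := by rw [dist_self_neg, hx, mul_one]
  have hedist : edist x (-x) = 2 := by simp [edist_dist, hdist]
  have hne : x ≠ -x := dist_ne_zero.1 (hdist.trans_ne two_ne_zero)
  have hfinite : eVariationOn γ (Set.Icc 0 1) ≠ ⊤ := by
    simpa [BoundedVariationOn] using hK.locallyBoundedVariationOn 0 1 (by simp) (by simp)
  have hfour : 4 ≤ eVariationOn γ (Set.Icc 0 1) :=
    calc (4 : ℝ≥0∞) = ({x, -x} : Finset V).card * 2 := by rw [Finset.card_pair hne]; norm_num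
      _ ≤ eVariationOn γ (Set.Icc 0 1) :=
          card_mul_le_eVariationOn_of_closed hclosed
            (Finset.one_lt_card_iff_nontrivial.1 (by simp [hne]))
            (by simp [himage, Set.insert_subset_iff, hx])
            (by simp [Set.pairwise_pair, edist_comm (-x), hedist])
  simpa [loopLength] using ENNReal.toReal_mono hfinite hfour

lemma three_div_le_of_mem_alphaSet {a : ℝ} (ha : a ∈ alphaSet) : 3 / 32 ≤ a := by
  obtain ⟨V, _, _, hV, γ, hγ, rfl⟩ := ha
  have : Nontrivial V := Module.nontrivial_of_finrank_eq_succ hV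
  have hJ : 0 < jungConstant V := zero_lt_one.trans_le (one_le_jungConstant V)
  have hL : 0 < loopLength γ := zero_lt_four.trans_le hγ.four_le_loopLength
  calc (3 / 32 : ℝ) = 1 / (32 / 3) := by norm_num
    _ ≤ 1 / (jungConstant V * loopLength γ) :=
        one_div_le_one_div_of_le (mul_pos hJ hL)
          (jungConstant_mul_loopLength_le hV hγ.continuousOn hγ.injOn_Ioo hγ.mapsTo)

lemma one_div_eight_mem_alphaSet : 1 / 8 ∈ alphaSet := by
  obtain ⟨γ, hγ⟩ := exists_sphereParam (V := ℝ × ℝ) (by simp)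
  refine ⟨ℝ × ℝ, inferInstance, inferInstance, by simp, γ, hγ, ?_⟩
  rw [jungConstant_prod_real,
    loopLength_unitSquare hγ.continuousOn hγ.1.2 hγ.injOn_Ioo hγ.2.2, one_mul]

end Bounds

theorem jung_times_girth_bounds_general :
    (∀ (V : Type u) [NormedAddCommGroup V] [NormedSpace ℝ V],
        Module.finrank ℝ V = 2 → ∀ γ : ℝ → V, ContinuousOn γ (Set.Icc 0 1) →
          Set.InjOn γ (Set.Ioo 0 1) → Set.MapsTo γ (Set.Icc 0 1) (Metric.sphere 0 1) →
          jungConstant V * loopLength γ ≤ 32 / 3) ∧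
    jungConstant (ℝ × ℝ) = 1 ∧
    (∀ γ : ℝ → ℝ × ℝ, ContinuousOn γ (Set.Icc 0 1) → γ 0 = γ 1 → Set.InjOn γ (Set.Ioo 0 1) →
        γ '' Set.Icc 0 1 = Metric.sphere 0 1 → loopLength γ = 8) ∧
    3 / 32 ≤ sInf alphaSet ∧ sInf alphaSet ≤ 1 / 8 :=
  ⟨fun _ _ _ hV _ hγ hinj hmaps => jungConstant_mul_loopLength_le hV hγ hinj hmaps,
    jungConstant_prod_real,
    fun _ hγ hclosed hinj himage => loopLength_unitSquare hγ hclosed hinj himage,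
    le_csInf ⟨_, one_div_eight_mem_alphaSet⟩ fun _ => three_div_le_of_mem_alphaSet,
    csInf_le ⟨_, fun _ => three_div_le_of_mem_alphaSet⟩ one_div_eight_mem_alphaSet⟩

/-- for every `2`-dimensional real normed space `V` one has
`J(V)·length(∂B_V) ≤ 32/3`; for `ℝ²` with the sup norm, `J = 1` and
`length(∂B) = 8`; consequently `3/32 ≤ ᾱ₀ = inf_V α_V ≤ 1/8`. -/
theorem jung_times_girth_bounds :
    (∀ (V : Type) [NormedAddCommGroup V] [NormedSpace ℝ V],
        Module.finrank ℝ V = 2 → ∀ γ : ℝ → V, SphereParam V γ →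
          jungConstant V * loopLength γ ≤ 32 / 3) ∧
    jungConstant (ℝ × ℝ) = 1 ∧
    (∀ γ : ℝ → ℝ × ℝ, SphereParam (ℝ × ℝ) γ → loopLength γ = 8) ∧
    3 / 32 ≤ sInf alphaSet ∧ sInf alphaSet ≤ 1 / 8 := by
  obtain ⟨hbound, hJ, hsquare, hinf⟩ := jung_times_girth_bounds_general
  exact ⟨fun V _ _ hV γ hγ => hbound V hV γ hγ.continuousOn hγ.injOn_Ioo hγ.mapsTo, hJ,
    fun γ hγ => hsquare γ hγ.continuousOn hγ.1.2 hγ.injOn_Ioo hγ.2.2, hinf⟩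

end SharpIsop
end
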